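/- Let d ≥ 3 be a fixed integer and set 𝔡 = min{1/4, (d−2)/(2d)}. There exists N such that for all n ≥ N, the number of permutations P of [n]×[d] whose adjacency matrix A(P) has determinant 0 (as an integer matrix, i.e., is singular over ℝ) is at most n^{−𝔡}·(nd)!. -/

import Mathlib

open Finset

/-- Adjacency matrix of the directed configuration model. -/
def adjMat (n d : ℕ) (P : Equiv.Perm (Fin n × Fin d)) : Matrix (Fin n) (Fin n) ℤ :=
  fun k l => ((Finset.univ.filter (fun i : Fin d => (P (k, i)).1 = l)).card : ℤ)

namespace DSR

/-- number of permutations whose adjacency matrix kills `v` mod `p`. -/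
def goodCnt (n d p : ℕ) (v : Fin n → ZMod p) : ℕ :=
  (Finset.univ.filter (fun σ : Equiv.Perm (Fin n × Fin d) =>
    ∀ k, ∑ i, v (σ (k, i)).1 = 0)).card

lemma mulVec_adj (n d p : ℕ) (P : Equiv.Perm (Fin n × Fin d)) (v : Fin n → ZMod p) (k : Fin n) :
    ((adjMat n d P).map (Int.castRingHom (ZMod p))).mulVec v k = ∑ i, v (P (k, i)).1 := by
  simp only [Matrix.mulVec, dotProduct, Matrix.map_apply, adjMat, eq_intCast, Int.cast_natCast]
  rw [← Finset.sum_fiberwise (s := Finset.univ) (g := fun i : Fin d => (P (k, i)).1)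
    (f := fun i => v (P (k, i)).1)]
  refine Finset.sum_congr rfl fun l _ => ?_
  rw [Finset.sum_congr rfl (g := fun _ => v l)]
  · simp
  · intro i hi
    rw [(Finset.mem_filter.1 hi).2]

lemma first_moment (n d p : ℕ) [Fact p.Prime] :
    (p - 1) * (Finset.univ.filter (fun P : Equiv.Perm (Fin n × Fin d) =>
      (adjMat n d P).det = 0)).card
      ≤ ∑ v ∈ (Finset.univ : Finset (Fin n → ZMod p)).filter (fun v => v ≠ 0), goodCnt n d p v := by
  classical
  have h1 : ∑ v ∈ (Finset.univ : Finset (Fin n → ZMod p)).filter (fun v => v ≠ 0), goodCnt n d p v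
      = ∑ P : Equiv.Perm (Fin n × Fin d),
        (((Finset.univ : Finset (Fin n → ZMod p)).filter (fun v => v ≠ 0)).filter
          (fun v => ∀ k, ∑ i, v (P (k, i)).1 = 0)).card := by
    simp only [goodCnt]
    exact Finset.sum_card_bipartiteAbove_eq_sum_card_bipartiteBelow
      (fun (v : Fin n → ZMod p) (P : Equiv.Perm (Fin n × Fin d)) => ∀ k, ∑ i, v (P (k, i)).1 = 0)
  rw [h1, mul_comm, ← smul_eq_mul]
  refine le_trans ?_ (Finset.sum_le_sum_of_subset (Finset.filter_subset (fun P : Equiv.Perm (Fin n × Fin d) =>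
      (adjMat n d P).det = 0) Finset.univ))
  refine Finset.card_nsmul_le_sum _ _ _ ?_
  intro P hP
  have hdet := (Finset.mem_filter.1 hP).2
  have h2 : ((adjMat n d P).map (Int.castRingHom (ZMod p))).det = 0 := by
    have := RingHom.map_det (Int.castRingHom (ZMod p)) (adjMat n d P)
    rw [hdet, map_zero] at this
    exact this.symm
  obtain ⟨v, hv0, hv⟩ := Matrix.exists_mulVec_eq_zero_iff.2 h2
  have hv' : ∀ k, ∑ i, v (P (k, i)).1 = 0 := fun k => by
    rw [← mulVec_adj, hv]; rfl
  rw [← ZMod.card_units p, ← Finset.card_univ]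
  refine Finset.card_le_card_of_injOn (fun c : (ZMod p)ˣ => (c : ZMod p) • v) ?_ ?_
  · intro c _
    simp only [Finset.coe_filter, Finset.mem_filter, Finset.mem_univ, true_and, Set.mem_setOf_eq]
    refine ⟨?_, ?_⟩
    · simp [hv0]
    · intro k
      simp only [Pi.smul_apply, smul_eq_mul, ← Finset.mul_sum, hv' k, mul_zero]
  · intro c _ c' _ h
    obtain ⟨i, hi⟩ := Function.ne_iff.1 hv0
    have := congrFun h i
    simp only [Pi.smul_apply, smul_eq_mul] at this
    exact Units.ext (mul_right_cancel₀ hi this)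

/-- counting permutations through their colourings. -/
lemma perm_count {X κ : Type*} [Fintype X] [DecidableEq X] [Fintype κ] [DecidableEq κ]
    (c : X → κ) (R : (X → κ) → Prop) [DecidablePred R] :
    (Finset.univ.filter (fun σ : Equiv.Perm X => R (c ∘ σ))).card
      ≤ (∏ a, ((Finset.univ.filter (fun x => c x = a)).card).factorial) *
        (Finset.univ.filter (fun w : X → κ => R w ∧
          ∀ a, (Finset.univ.filter (fun x => w x = a)).card
            = (Finset.univ.filter (fun x => c x = a)).card)).card := by
  classical
  refine le_trans (Finset.card_le_mul_card_image (f := fun σ : Equiv.Perm X => c ∘ σ) _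
    (∏ a, ((Finset.univ.filter (fun x => c x = a)).card).factorial) ?_) ?_
  · intro w hw
    obtain ⟨σ, hσ, rfl⟩ := Finset.mem_image.1 hw
    have := DomMulAct.stabilizer_card c
    simp only [Fintype.card_subtype] at this
    rw [← this]
    refine Finset.card_le_card_of_injOn (fun τ => τ * σ⁻¹) ?_ ?_
    · intro τ hτ
      simp only [Finset.coe_filter, Finset.mem_filter, Set.mem_setOf_eq, Finset.mem_univ, true_and] at hτ ⊢
      funext x
      have := congrFun hτ.2 (σ⁻¹ x)
      simpa using this
    · intro τ _ τ' _ h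
      simpa using h
  · refine Nat.mul_le_mul_left _ (Finset.card_le_card ?_)
    intro w hw
    obtain ⟨σ, hσ, rfl⟩ := Finset.mem_image.1 hw
    simp only [Finset.mem_filter, Finset.mem_univ, true_and] at hσ ⊢
    refine ⟨hσ, fun a => ?_⟩
    exact Finset.card_equiv σ (by simp)

lemma sum_rows {κ R : Type*} [Fintype κ] [DecidableEq κ] [CommSemiring R] (n d : ℕ)
    (r : (Fin d → κ) → Prop) [DecidablePred r] (z : κ → R) :
    ∑ w ∈ Finset.univ.filter (fun w : Fin n × Fin d → κ => ∀ k, r (fun i => w (k, i))),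
      ∏ x, z (w x) = (∑ u ∈ Finset.univ.filter r, ∏ i, z (u i)) ^ n := by
  classical
  have h := Finset.prod_univ_sum (fun _ : Fin n => Finset.univ.filter r)
    (fun _ u => ∏ i, z (u i))
  rw [Finset.prod_const, Finset.card_univ, Fintype.card_fin] at h
  rw [h]
  refine Finset.sum_equiv (Equiv.curry (Fin n) (Fin d) κ) ?_ ?_
  · intro w
    simp only [Finset.mem_filter, Finset.mem_univ, true_and, Fintype.mem_piFinset, Equiv.curry_apply]
    rfl
  · intro w _
    rw [Fintype.prod_prod_type]
    rfl

lemma prod_type {X κ R : Type*} [Fintype X] [DecidableEq X] [Fintype κ] [DecidableEq κ] [CommMonoid R]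
    (w : X → κ) (z : κ → R) :
    ∏ x, z (w x) = ∏ a, z a ^ (Finset.univ.filter (fun x => w x = a)).card := by
  rw [← Finset.prod_fiberwise (s := Finset.univ) (g := w)]
  refine Finset.prod_congr rfl fun a _ => ?_
  rw [Finset.prod_congr rfl (g := fun _ => z a)]
  · simp
  · intro i hi
    rw [(Finset.mem_filter.1 hi).2]

/-- saddle point bound on the number of arrangements of a given type. -/
lemma type_bound {κ : Type*} [Fintype κ] [DecidableEq κ] (n d : ℕ)
    (r : (Fin d → κ) → Prop) [DecidablePred r] (x : κ → ℝ) (hx : ∀ a, 0 ≤ x a) (m : κ → ℕ) :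
    ((Finset.univ.filter (fun w : Fin n × Fin d → κ => (∀ k, r (fun i => w (k, i))) ∧
      ∀ a, (Finset.univ.filter (fun y => w y = a)).card = m a)).card : ℝ) * ∏ a, x a ^ m a
      ≤ (∑ u ∈ Finset.univ.filter r, ∏ i, x (u i)) ^ n := by
  classical
  rw [← sum_rows, ← Finset.filter_filter, ← nsmul_eq_mul, ← Finset.sum_const]
  refine le_trans (le_of_eq ?_) (Finset.sum_le_sum_of_subset_of_nonneg (Finset.filter_subset
    (fun w : Fin n × Fin d → κ =>  ∀ a, (Finset.univ.filter (fun y => w y = a)).card = m a) _) ?_)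
  · refine Finset.sum_congr rfl fun w hw => ?_
    rw [prod_type]
    refine Finset.prod_congr rfl fun a _ => ?_
    rw [(Finset.mem_filter.1 hw).2 a]
  · intro w _ _
    exact Finset.prod_nonneg fun i _ => hx _

/-- cnt of lifted colouring -/
lemma card_lift {κ : Type*} [DecidableEq κ] (n d : ℕ) (v : Fin n → κ) (a : κ) :
    (Finset.univ.filter (fun x : Fin n × Fin d => v x.1 = a)).card
      = d * (Finset.univ.filter (fun i => v i = a)).card := by
  have : (Finset.univ.filter (fun x : Fin n × Fin d => v x.1 = a))
      = (Finset.univ.filter (fun i => v i = a)) ×ˢ (Finset.univ : Finset (Fin d)) := by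
    ext x; simp
  rw [this, Finset.card_product, Finset.card_univ, Fintype.card_fin, mul_comm]

end DSR

namespace DSR

lemma choose_lower (N k : ℕ) (hk : k ≤ N) :
    (k.factorial * (N - k).factorial) * N ^ k ≤ N.factorial * k ^ k := by
  have h : k.factorial * N ^ k ≤ N.descFactorial k * k ^ k := by
    rw [← Nat.descFactorial_self, Nat.descFactorial_eq_prod_range, Nat.descFactorial_eq_prod_range]
    have e1 : N ^ k = ∏ _i ∈ range k, N := by simp
    have e2 : k ^ k = ∏ _i ∈ range k, k := by simp
    rw [e1, e2, ← Finset.prod_mul_distrib, ← Finset.prod_mul_distrib]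
    refine Finset.prod_le_prod' fun i hi => ?_
    have hi' := Finset.mem_range.1 hi
    obtain ⟨a, rfl⟩ := Nat.exists_eq_add_of_lt hi'
    obtain ⟨b, rfl⟩ := Nat.exists_eq_add_of_le hk
    have : i + a + 1 - i = a + 1 := by omega
    have h2 : i + a + 1 + b - i = a + 1 + b := by omega
    rw [this, h2]
    nlinarith [Nat.zero_le (i*b)]
  rw [← Nat.factorial_mul_descFactorial hk]
  calc _ = (N-k).factorial * (k.factorial * N ^ k) := by ring
    _ ≤ (N-k).factorial * (N.descFactorial k * k ^ k) := Nat.mul_le_mul_left _ h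
    _ = _ := by ring

lemma sparse_one (n d p : ℕ) (hd : 3 ≤ d) (v : Fin n → ZMod p) (s : ℕ)
    (hs : (Finset.univ.filter (fun i => v i ≠ 0)).card = s) (hs1 : 1 ≤ s) (t : ℝ) (ht0 : 0 < t)
    (ht : t ^ 2 = (s : ℝ) / n) :
    (goodCnt n d p v : ℝ) ≤ ((n * d).factorial : ℝ) * (Real.exp (2 ^ d) * t ^ 3) ^ s := by
  classical
  have hsn : s ≤ n := by
    rw [← hs]; exact (Finset.card_filter_le _ _).trans (by simp)
  have hn : 0 < n := by omega
  have ht1 : t ≤ 1 := by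
    have : t ^ 2 ≤ 1 := by
      rw [ht, div_le_one (by positivity)]; exact_mod_cast hsn
    nlinarith
  set c : Fin n × Fin d → Bool := fun x => decide (v x.1 ≠ 0) with hc
  let r : (Fin d → Bool) → Prop := fun u => (Finset.univ.filter (fun i => u i = true)).card ≠ 1
  have h1 : goodCnt n d p v ≤ (Finset.univ.filter (fun σ : Equiv.Perm (Fin n × Fin d) =>
      ∀ k, r (fun i => (c ∘ σ) (k, i)))).card := by
    refine Finset.card_le_card fun σ hσ => ?_
    simp only [Finset.mem_filter, Finset.mem_univ, true_and] at hσ ⊢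
    intro k hk
    obtain ⟨i, hi⟩ := Finset.card_eq_one.1 hk
    have hi1 : v (σ (k, i)).1 ≠ 0 := by
      have : i ∈ ({i} : Finset (Fin d)) := by simp
      rw [← hi] at this
      simpa [hc] using this
    have := hσ k
    rw [Finset.sum_eq_single i] at this
    · exact hi1 this
    · intro j _ hj
      by_contra h0
      have : j ∈ ({i} : Finset (Fin d)) := by
        rw [← hi]; simpa [hc] using h0
      exact hj (by simpa using this)
    · simp
  have h2 := perm_count c (fun w => ∀ k, r (fun i => w (k, i)))
  have ct : (Finset.univ.filter (fun x => c x = true)).card = d * s := by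
    rw [← hs, card_lift n d (fun i => decide (v i ≠ 0)) true]
    simp
  have cf : (Finset.univ.filter (fun x => c x = false)).card = n * d - d * s := by
    have := Finset.card_filter_add_card_filter_not (s := (Finset.univ : Finset (Fin n × Fin d)))
      (fun x => c x = true)
    rw [ct] at this
    simp only [Bool.not_eq_true, Finset.card_univ, Fintype.card_prod, Fintype.card_fin] at this
    omega
  have h3 := type_bound n d r (fun b => if b then t else 1) (by intro a; split_ifs <;> positivity)
    (fun a => (Finset.univ.filter (fun x => c x = a)).card)
  simp only [Fintype.prod_bool, ct, cf] at h2 h3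
  simp only [if_true, Bool.false_eq_true, if_false, one_pow, mul_one] at h3
  set W := (Finset.univ.filter (fun w : Fin n × Fin d → Bool => (∀ k, r (fun i => w (k, i))) ∧
      ∀ a, (Finset.univ.filter (fun y => w y = a)).card
        = (Finset.univ.filter (fun x => c x = a)).card)).card with hW
  have h4 : (∑ u ∈ Finset.univ.filter r, ∏ i, (if u i then t else 1 : ℝ)) ≤ 1 + 2 ^ d * t ^ 2 := by
    have hb : ∀ u ∈ Finset.univ.filter r, ∏ i, (if u i then t else 1 : ℝ)
        ≤ (if u = fun _ => false then 1 else 0) + t ^ 2 := by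
      intro u hu
      have hu' : (Finset.univ.filter (fun i => u i = true)).card ≠ 1 := (Finset.mem_filter.1 hu).2
      rw [Finset.prod_ite, Finset.prod_const, Finset.prod_const_one, mul_one]
      split_ifs with h
      · have : t ^ _ ≤ (1:ℝ) := pow_le_one₀ (n := (Finset.univ.filter (fun i => u i = true)).card) ht0.le ht1
        nlinarith [sq_nonneg t]
      · have h0 : (Finset.univ.filter (fun i => u i = true)).card ≠ 0 := by
          intro h0
          apply h
          funext i
          by_contra hi
          have := Finset.filter_eq_empty_iff.1 (Finset.card_eq_zero.1 h0) (Finset.mem_univ i)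
          simp at this hi
          rw [this] at hi
          exact absurd hi (by simp)
        rw [zero_add]
        exact pow_le_pow_of_le_one ht0.le ht1 (by omega)
    refine (Finset.sum_le_sum hb).trans ?_
    rw [Finset.sum_add_distrib]
    refine add_le_add ?_ ?_
    · refine (Finset.sum_le_sum_of_subset_of_nonneg (Finset.filter_subset _ _) ?_).trans ?_
      · intros; split_ifs <;> norm_num
      · simp
    · rw [Finset.sum_const, nsmul_eq_mul]
      refine mul_le_mul_of_nonneg_right ?_ (by positivity)
      have : (Finset.univ.filter r).card ≤ 2 ^ d := (Finset.card_filter_le _ _).trans (by simp)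
      exact_mod_cast this
  have h5 : (W : ℝ) * t ^ (d * s) ≤ Real.exp (2 ^ d) ^ s := by
    have h3' : (W : ℝ) * t ^ (d * s) ≤
        (∑ u ∈ Finset.univ.filter r, ∏ i, (if u i then t else 1 : ℝ)) ^ n := by
      convert h3
    refine h3'.trans ?_
    calc _ ≤ (1 + 2 ^ d * t ^ 2) ^ n := pow_le_pow_left₀ (Finset.sum_nonneg fun u _ =>
            Finset.prod_nonneg fun i _ => by split_ifs <;> positivity) h4 n
      _ ≤ (Real.exp (2 ^ d * t ^ 2)) ^ n := pow_le_pow_left₀ (by positivity) (by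
            rw [add_comm]; exact Real.add_one_le_exp _) n
      _ = Real.exp (2 ^ d) ^ s := by
            rw [← Real.exp_nat_mul, ← Real.exp_nat_mul, ht]
            congr 1
            field_simp
  have h6 := choose_lower (n * d) (d * s) (by nlinarith)
  have h6' : (((d*s).factorial : ℝ) * ((n*d - d*s).factorial : ℝ)) ≤ ((n*d).factorial : ℝ) * (t^2) ^ (d*s) := by
    have h7 : (((d*s).factorial : ℝ) * ((n*d - d*s).factorial : ℝ)) * ((n*d : ℕ):ℝ)^(d*s)
        ≤ ((n*d).factorial : ℝ) * ((d*s : ℕ) : ℝ)^(d*s) := by exact_mod_cast h6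
    have hnd : (0:ℝ) < ((n*d : ℕ):ℝ)^(d*s) := by
      have : 0 < n * d := by positivity
      positivity
    have h8 : (t^2) ^ (d*s) * ((n*d : ℕ):ℝ)^(d*s) = ((d*s : ℕ) : ℝ)^(d*s) := by
      rw [← mul_pow, ht]
      congr 1
      push_cast
      field_simp
    refine le_of_mul_le_mul_right ?_ hnd
    rw [mul_assoc ((n*d).factorial : ℝ), h8]
    exact h7
  have h9 : (goodCnt n d p v : ℝ) ≤ ((d*s).factorial : ℝ) * ((n*d - d*s).factorial : ℝ) * W := by
    have h10 : goodCnt n d p v ≤ (d*s).factorial * (n*d - d*s).factorial * W := by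
      refine h1.trans (h2.trans (le_of_eq ?_))
      congr!
    exact_mod_cast h10
  calc (goodCnt n d p v : ℝ) ≤ ((n*d).factorial : ℝ) * (t^2) ^ (d*s) * W :=
        h9.trans (mul_le_mul_of_nonneg_right h6' (by positivity))
    _ = ((n*d).factorial : ℝ) * t ^ (d*s) * (W * t ^ (d*s)) := by ring
    _ ≤ ((n*d).factorial : ℝ) * t ^ (d*s) * Real.exp (2 ^ d) ^ s :=
        mul_le_mul_of_nonneg_left h5 (by positivity)
    _ ≤ ((n*d).factorial : ℝ) * t ^ (3*s) * Real.exp (2 ^ d) ^ s := by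
        refine mul_le_mul_of_nonneg_right (mul_le_mul_of_nonneg_left ?_ (by positivity)) (by positivity)
        exact pow_le_pow_of_le_one ht0.le ht1 (Nat.mul_le_mul_right _ hd)
    _ = _ := by rw [mul_pow, ← pow_mul]; ring

lemma card_supp (n p : ℕ) [NeZero p] (s : ℕ) :
    (Finset.univ.filter (fun v : Fin n → ZMod p =>
      (Finset.univ.filter (fun i => v i ≠ 0)).card = s)).card ≤ p ^ s * n.choose s := by
  classical
  have := Finset.card_le_mul_card_image_of_maps_to
    (f := fun v : Fin n → ZMod p => Finset.univ.filter (fun i => v i ≠ 0))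
    (s := Finset.univ.filter (fun v : Fin n → ZMod p =>
      (Finset.univ.filter (fun i => v i ≠ 0)).card = s))
    (t := Finset.powersetCard s Finset.univ) (by intro v hv; simpa [Finset.mem_powersetCard] using hv)
    (p ^ s) ?_
  · simpa using this
  · intro S hS
    have hS' := (Finset.mem_powersetCard.1 hS).2
    have hc : Fintype.card (S → ZMod p) = p ^ s := by simp [hS']
    rw [← hc, ← Finset.card_univ]
    refine Finset.card_le_card_of_injOn (fun v i => v i) (by simp) ?_
    intro v hv w hw h
    simp only [Finset.coe_filter, Finset.mem_filter, Set.mem_ofPred_eq, Finset.mem_univ, true_and] at hv hw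
    funext i
    by_cases hi : i ∈ S
    · exact congrFun h ⟨i, hi⟩
    · have h1 : v i = 0 := by
        by_contra h0; apply hi; rw [← hv.2]; simpa using h0
      have h2 : w i = 0 := by
        by_contra h0; apply hi; rw [← hw.2]; simpa using h0
      rw [h1, h2]

lemma sparse_total (n d p : ℕ) [NeZero p] (hd : 3 ≤ d) (δ : ℝ)
    (hδ : Real.exp (1 + 2 ^ d) * p * √δ ≤ 1 / 2) :
    ∑ v ∈ Finset.univ.filter (fun v : Fin n → ZMod p => v ≠ 0 ∧
      ((Finset.univ.filter (fun i => v i ≠ 0)).card : ℝ) ≤ δ * n), (goodCnt n d p v : ℝ)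
      ≤ ((n * d).factorial : ℝ) := by
  classical
  have key : ∀ s : ℕ, ∑ v ∈ (Finset.univ.filter (fun v : Fin n → ZMod p => v ≠ 0 ∧
      ((Finset.univ.filter (fun i => v i ≠ 0)).card : ℝ) ≤ δ * n)).filter
      (fun v => (Finset.univ.filter (fun i => v i ≠ 0)).card = s), (goodCnt n d p v : ℝ)
      ≤ if s = 0 then 0 else ((n * d).factorial : ℝ) * (1/2) ^ s := by
    intro s
    by_cases hs0 : s = 0
    · rw [if_pos hs0, Finset.sum_eq_zero]
      intro v hv
      simp only [Finset.mem_filter, Finset.mem_univ, true_and] at hv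
      exfalso
      apply hv.1.1
      funext i
      have h := hv.2
      rw [hs0, Finset.card_eq_zero, Finset.filter_eq_empty_iff] at h
      simpa using h (Finset.mem_univ i)
    rw [if_neg hs0]
    by_cases hsδ : (s : ℝ) ≤ δ * n ∧ s ≤ n
    swap
    · rw [Finset.sum_eq_zero]
      · positivity
      · intro v hv
        simp only [Finset.mem_filter, Finset.mem_univ, true_and] at hv
        exfalso
        apply hsδ
        rw [← hv.2]
        exact ⟨hv.1.2, (Finset.card_filter_le _ _).trans (by simp)⟩
    obtain ⟨hsδ, hsn⟩ := hsδ
    have hn : 0 < n := by omega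
    have hnR : (0:ℝ) < n := by exact_mod_cast hn
    have hsR : (0:ℝ) < s := by exact_mod_cast Nat.pos_of_ne_zero hs0
    set t := √((s:ℝ)/n) with ht
    have ht0 : 0 < t := Real.sqrt_pos.2 (by positivity)
    have ht2 : t ^ 2 = (s:ℝ)/n := Real.sq_sqrt (by positivity)
    have htδ : t ≤ √δ := Real.sqrt_le_sqrt (by rw [div_le_iff₀ hnR]; exact hsδ)
    have hc : (((Finset.univ.filter (fun v : Fin n → ZMod p => v ≠ 0 ∧
      ((Finset.univ.filter (fun i => v i ≠ 0)).card : ℝ) ≤ δ * n)).filter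
      (fun v => (Finset.univ.filter (fun i => v i ≠ 0)).card = s)).card : ℝ) ≤ (p * (Real.exp 1 / t^2)) ^ s := by
      have h1 : (((Finset.univ.filter (fun v : Fin n → ZMod p => v ≠ 0 ∧
      ((Finset.univ.filter (fun i => v i ≠ 0)).card : ℝ) ≤ δ * n)).filter
      (fun v => (Finset.univ.filter (fun i => v i ≠ 0)).card = s)).card) ≤ p ^ s * n.choose s :=
        (Finset.card_le_card (Finset.filter_subset_filter _ (Finset.filter_subset _ _))).trans
          (card_supp n p s)
      have h2 : (n.choose s : ℝ) ≤ (Real.exp 1 / t^2) ^ s := by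
        refine (Nat.choose_le_pow_div s n).trans ?_
        have h3 : ((s:ℝ) / Real.exp 1) ^ s ≤ (s.factorial : ℝ) := by
          refine le_trans ?_ (Stirling.le_factorial_stirling s)
          refine le_mul_of_one_le_left (by positivity) ?_
          rw [Real.one_le_sqrt]
          have : (1:ℝ) ≤ s := by exact_mod_cast Nat.pos_of_ne_zero hs0
          nlinarith [Real.pi_gt_three]
        rw [div_le_iff₀ (by positivity)]
        calc (n:ℝ)^s = (Real.exp 1 / t^2) ^ s * ((s:ℝ) / Real.exp 1) ^ s := by
              rw [← mul_pow, ht2]; congr 1; field_simp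
          _ ≤ _ := mul_le_mul_of_nonneg_left h3 (by positivity)
      calc _ ≤ ((p ^ s * n.choose s : ℕ) : ℝ) := by exact_mod_cast h1
        _ = (p:ℝ)^s * n.choose s := by push_cast; ring
        _ ≤ (p:ℝ)^s * (Real.exp 1 / t^2) ^ s := mul_le_mul_of_nonneg_left h2 (by positivity)
        _ = _ := by rw [mul_pow]
    refine (Finset.sum_le_sum (g := fun _ =>
      ((n * d).factorial : ℝ) * (Real.exp (2 ^ d) * t ^ 3) ^ s) fun v hv =>
      sparse_one n d p hd v s (Finset.mem_filter.1 hv).2 (Nat.pos_of_ne_zero hs0) t ht0 ht2).trans ?_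
    rw [Finset.sum_const, nsmul_eq_mul]
    refine (mul_le_mul_of_nonneg_right hc (by positivity)).trans ?_
    calc (p * (Real.exp 1 / t^2)) ^ s * (((n * d).factorial : ℝ) * (Real.exp (2 ^ d) * t ^ 3) ^ s)
        _ = ((n * d).factorial : ℝ) * (Real.exp (1 + 2 ^ d) * p * t) ^ s := by
          rw [Real.exp_add, mul_left_comm, ← mul_pow]
          congr 2
          field_simp
        _ ≤ _ := by
          refine mul_le_mul_of_nonneg_left (pow_le_pow_left₀ (by positivity) ?_ s) (by positivity)
          refine le_trans ?_ hδ
          exact mul_le_mul_of_nonneg_left htδ (by positivity)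
  have hmaps : ∀ v ∈ Finset.univ.filter (fun v : Fin n → ZMod p => v ≠ 0 ∧
      ((Finset.univ.filter (fun i => v i ≠ 0)).card : ℝ) ≤ δ * n),
      (Finset.univ.filter (fun i => v i ≠ 0)).card ∈ Finset.range (n+1) := by
    intro v _
    rw [Finset.mem_range, Nat.lt_succ_iff]
    exact (Finset.card_filter_le _ _).trans (by simp)
  rw [← Finset.sum_fiberwise_of_maps_to hmaps]
  · refine (Finset.sum_le_sum fun s _ => key s).trans ?_
    rw [Finset.sum_range_succ']
    simp only [Nat.add_eq_zero_iff, one_ne_zero, and_false, if_false, if_true, add_zero]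
    rw [← Finset.mul_sum]
    refine mul_le_of_le_one_right (by positivity) ?_
    have : ∀ m : ℕ, ∑ i ∈ range m, (1/2:ℝ) ^ (i+1) = 1 - (1/2)^m := by
      intro m
      induction m with
      | zero => simp
      | succ k ih => rw [Finset.sum_range_succ, ih]; ring
    rw [this]
    have : (0:ℝ) ≤ (1/2)^n := by positivity
    linarith

end DSR

namespace DSR

/-- Fourier transform on `ZMod p`. -/
noncomputable def hat {p : ℕ} [NeZero p] (h : ZMod p → ℂ) (k : ZMod p) : ℂ :=
  ∑ a, h a * ZMod.stdAddChar (k * a)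

lemma norm_char {p : ℕ} [NeZero p] (a : ZMod p) : ‖(ZMod.stdAddChar a : ℂ)‖ = 1 :=
  AddChar.norm_apply _ _

lemma conj_char {p : ℕ} [NeZero p] (a : ZMod p) :
    (starRingEnd ℂ) (ZMod.stdAddChar a : ℂ) = ZMod.stdAddChar (-a) :=
  (AddChar.map_neg_eq_conj _ _).symm

lemma sum_char {p : ℕ} [NeZero p] (b : ZMod p) :
    ∑ k : ZMod p, (ZMod.stdAddChar (k * b) : ℂ) = if b = 0 then (p : ℂ) else 0 := by
  rw [AddChar.sum_mulShift b (ZMod.isPrimitive_stdAddChar p)]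
  simp

lemma char_sum {p : ℕ} [NeZero p] {ι : Type*} (s : Finset ι) (f : ι → ZMod p) :
    (ZMod.stdAddChar (∑ i ∈ s, f i) : ℂ) = ∏ i ∈ s, (ZMod.stdAddChar (f i) : ℂ) := by
  classical
  induction s using Finset.induction_on with
  | empty => simp
  | insert a s ha ih => rw [Finset.sum_insert ha, Finset.prod_insert ha,
      AddChar.map_add_eq_mul, ih]

lemma zero_sum_fourier {p : ℕ} [NeZero p] {ι : Type*} [Fintype ι] [DecidableEq ι]
    (h : ι → ZMod p → ℂ) :
    (p : ℂ) * ∑ u ∈ Finset.univ.filter (fun u : ι → ZMod p => ∑ i, u i = 0), ∏ i, h i (u i)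
      = ∑ k, ∏ i, hat (h i) k := by
  simp only [hat]
  have h1 : ∀ k : ZMod p, ∏ i, ∑ a, h i a * (ZMod.stdAddChar (k * a) : ℂ)
      = ∑ u : ι → ZMod p, (∏ i, h i (u i)) * ZMod.stdAddChar (k * ∑ i, u i) := by
    intro k
    rw [Finset.prod_univ_sum, Fintype.piFinset_univ]
    refine Finset.sum_congr rfl fun u _ => ?_
    rw [Finset.prod_mul_distrib, Finset.mul_sum, char_sum]
  simp only [h1]
  rw [Finset.sum_comm, Finset.mul_sum, Finset.sum_filter]
  refine Finset.sum_congr rfl fun u _ => ?_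
  rw [← Finset.mul_sum, sum_char]
  split_ifs <;> ring

lemma plancherel_shift {p : ℕ} [NeZero p] (h : ZMod p → ℂ) (u : ZMod p) :
    ∑ k, (hat h k * (starRingEnd ℂ) (hat h k)) * (ZMod.stdAddChar (k * u) : ℂ)
      = p * ∑ a, h a * (starRingEnd ℂ) (h (a + u)) := by
  have h1 : ∀ k : ZMod p, (hat h k * (starRingEnd ℂ) (hat h k)) * (ZMod.stdAddChar (k * u) : ℂ)
      = ∑ a, ∑ b, (h a * (starRingEnd ℂ) (h b)) * (ZMod.stdAddChar (k * (a + u - b)) : ℂ) := by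
    intro k
    simp only [hat, map_sum, map_mul, conj_char]
    rw [Finset.sum_mul_sum, Finset.sum_mul]
    refine Finset.sum_congr rfl fun a _ => ?_
    rw [Finset.sum_mul]
    refine Finset.sum_congr rfl fun b _ => ?_
    have : k * (a + u - b) = k * a + -(k * b) + k * u := by ring
    rw [this, AddChar.map_add_eq_mul, AddChar.map_add_eq_mul]
    ring
  simp only [h1]
  rw [Finset.sum_comm, Finset.mul_sum]
  refine Finset.sum_congr rfl fun a _ => ?_
  rw [Finset.sum_comm, Finset.sum_eq_single (a + u)]
  · rw [← Finset.mul_sum, sum_char]; simp; ring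
  · intro b _ hb
    rw [← Finset.mul_sum, sum_char, if_neg, mul_zero]
    intro h0
    exact hb (sub_eq_zero.1 h0).symm
  · simp

lemma plancherel {p : ℕ} [NeZero p] (h : ZMod p → ℂ) :
    ∑ k, ‖hat h k‖ ^ 2 = p * ∑ a, ‖h a‖ ^ 2 := by
  have := plancherel_shift h 0
  simp only [mul_zero, AddChar.map_zero_eq_one, mul_one, add_zero, Complex.mul_conj,
    Complex.normSq_eq_norm_sq] at this
  exact_mod_cast this

lemma norm_hat_le {p : ℕ} [NeZero p] (h : ZMod p → ℂ) (k : ZMod p) :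
    ‖hat h k‖ ≤ ∑ a, ‖h a‖ := by
  refine (norm_sum_le _ _).trans (le_of_eq ?_)
  simp [norm_char]

/-- the Hölder type partition function. -/
noncomputable def Qf (d p : ℕ) [NeZero p] (ν : ZMod p → ℝ) : ℝ :=
  ∑ u ∈ Finset.univ.filter (fun u : Fin d → ZMod p => ∑ i, u i = 0),
    ∏ i, ν (u i) ^ (((d : ℝ) - 1) / d)

noncomputable def eexp (d : ℕ) (l : Fin d) : ℝ := if l.val < 2 then 1/2 else 1

lemma eexp_nonneg (d : ℕ) (l : Fin d) : 0 ≤ eexp d l := by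
  unfold eexp; split_ifs <;> norm_num

lemma sum_eexp (d : ℕ) (hd : 3 ≤ d) : ∑ l, eexp d l = d - 1 := by
  obtain ⟨e, rfl⟩ := Nat.exists_eq_add_of_le hd
  have : 3 + e = (e + 1) + 2 := by ring
  rw [show (∑ l, eexp (3+e) l) = ∑ i ∈ range (3+e), (if i < 2 then (1/2:ℝ) else 1) from
    (Finset.sum_range (fun i => if i < 2 then (1/2:ℝ) else 1)).symm]
  rw [this, Finset.sum_range_succ', Finset.sum_range_succ']
  simp
  ring

lemma Qf_le_G (d p : ℕ) [NeZero p] (hd : 3 ≤ d) (ν : ZMod p → ℝ) (hν : ∀ a, 0 ≤ ν a) :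
    Qf d p ν ≤ ∑ u ∈ Finset.univ.filter (fun u : Fin d → ZMod p => ∑ i, u i = 0),
      ∏ i, ν (u i) ^ eexp d i := by
  haveI : NeZero d := ⟨by omega⟩
  have hdR : (0:ℝ) < d := by exact_mod_cast (by omega : 0 < d)
  set Z := Finset.univ.filter (fun u : Fin d → ZMod p => ∑ i, u i = 0) with hZ
  have pt : ∀ u : Fin d → ZMod p, ∏ i, ν (u i) ^ (((d : ℝ) - 1) / d)
      ≤ ∑ c : Fin d, (1/(d:ℝ)) * ∏ m, ν (u m) ^ eexp d (m - c) := by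
    intro u
    have h := Real.geom_mean_le_arith_mean_weighted Finset.univ (fun _ : Fin d => 1/(d:ℝ))
      (fun c => ∏ m, ν (u m) ^ eexp d (m - c)) (fun _ _ => by positivity) (by simp [hdR.ne'])
      (fun c _ => Finset.prod_nonneg fun m _ => Real.rpow_nonneg (hν _) _)
    refine le_trans (le_of_eq ?_) h
    simp only [← Real.finsetProd_rpow _ _ (fun m _ => Real.rpow_nonneg (hν _) _)]
    rw [Finset.prod_comm]
    refine Finset.prod_congr rfl fun m _ => ?_
    simp only [← Real.rpow_mul (hν _)]
    rw [← Real.rpow_sum_of_nonneg (hν _) (fun c _ => mul_nonneg (eexp_nonneg _ _) (by positivity))]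
    congr 1
    have hs : ∑ i, eexp d (m - i) = ∑ i, eexp d i := Equiv.sum_comp (Equiv.subLeft m) (eexp d)
    rw [← Finset.sum_mul, hs, sum_eexp d hd]
    ring
  calc Qf d p ν ≤ ∑ u ∈ Z, ∑ c : Fin d, (1/(d:ℝ)) * ∏ m, ν (u m) ^ eexp d (m - c) :=
        Finset.sum_le_sum fun u _ => pt u
    _ = ∑ c : Fin d, (1/(d:ℝ)) * ∑ u ∈ Z, ∏ i, ν (u i) ^ eexp d i := by
        rw [Finset.sum_comm]
        refine Finset.sum_congr rfl fun c _ => ?_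
        rw [← Finset.mul_sum]
        congr 1
        refine Finset.sum_equiv (Equiv.arrowCongr (Equiv.subRight c) (Equiv.refl _)) ?_ ?_
        · intro u
          simp only [hZ, Finset.mem_filter, Finset.mem_univ, true_and]
          have : ∑ i, (Equiv.arrowCongr (Equiv.subRight c) (Equiv.refl (ZMod p))) u i = ∑ i, u i := by
            simp only [Equiv.arrowCongr_apply, Function.comp, Equiv.refl_apply]
            exact Equiv.sum_comp (Equiv.subRight c).symm u
          rw [this]
        · intro u _
          refine Eq.trans ?_ (Equiv.prod_comp (Equiv.subRight c) (fun i => ν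
            ((Equiv.arrowCongr (Equiv.subRight c) (Equiv.refl (ZMod p))) u i) ^ eexp d i))
          refine Finset.prod_congr rfl fun m _ => ?_
          simp
    _ = _ := by
        rw [Finset.sum_const, Finset.card_univ, Fintype.card_fin, nsmul_eq_mul, ← mul_assoc,
          mul_one_div_cancel hdR.ne', one_mul]

lemma Qf_le_fourier (d p : ℕ) [NeZero p] (hd : 3 ≤ d) (ν : ZMod p → ℝ) (hν : ∀ a, 0 ≤ ν a)
    (h1 : ∑ a, ν a = 1) :
    p * Qf d p ν ≤ ∑ k, ‖hat (fun a => ((√(ν a) : ℝ) : ℂ)) k‖ ^ 2 * ‖hat (fun a => (ν a : ℂ)) k‖ := by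
  have hG := Qf_le_G d p hd ν hν
  have hp : (0:ℝ) < p := by exact_mod_cast Nat.pos_of_ne_zero (NeZero.ne p)
  refine (mul_le_mul_of_nonneg_left hG hp.le).trans ?_
  have hf := zero_sum_fourier (fun (i : Fin d) (a : ZMod p) => ((ν a ^ eexp d i : ℝ) : ℂ))
  have hcast : (p : ℂ) * ∑ u ∈ Finset.univ.filter (fun u : Fin d → ZMod p => ∑ i, u i = 0),
      ∏ i, ((ν (u i) ^ eexp d i : ℝ) : ℂ) = ((p * ∑ u ∈ Finset.univ.filter
      (fun u : Fin d → ZMod p => ∑ i, u i = 0), ∏ i, ν (u i) ^ eexp d i : ℝ) : ℂ) := by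
    push_cast; rfl
  rw [hcast] at hf
  refine (le_abs_self _).trans ?_
  rw [← Real.norm_eq_abs, ← Complex.norm_real, hf]
  refine (norm_sum_le _ _).trans (Finset.sum_le_sum fun k _ => ?_)
  rw [norm_prod]
  have hN1 : ‖hat (fun a => (ν a : ℂ)) k‖ ≤ 1 := by
    refine (norm_hat_le _ _).trans (le_of_eq ?_)
    rw [← h1]
    refine Finset.sum_congr rfl fun a _ => ?_
    rw [Complex.norm_real, Real.norm_of_nonneg (hν a)]
  obtain ⟨e, rfl⟩ := Nat.exists_eq_add_of_le hd
  have hprod : ∏ i : Fin (3 + e), ‖hat (fun a => ((ν a ^ eexp (3+e) i : ℝ) : ℂ)) k‖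
      = ∏ i ∈ range (3 + e), (if i < 2 then ‖hat (fun a => ((√(ν a) : ℝ) : ℂ)) k‖
        else ‖hat (fun a => (ν a : ℂ)) k‖) := by
    rw [Finset.prod_range]
    refine Finset.prod_congr rfl fun i _ => ?_
    unfold eexp
    split_ifs
    · simp only [Real.sqrt_eq_rpow]
    · simp only [Real.rpow_one]
  rw [hprod, show 3 + e = (e + 1) + 2 by ring, Finset.prod_range_succ', Finset.prod_range_succ']
  simp only [show ∀ i, ¬ (i + 1 + 1 < 2) by intro i; omega, if_false, Finset.prod_const, card_range]
  norm_num
  rw [pow_succ]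
  have : ‖hat (fun a => (ν a : ℂ)) k‖ ^ e ≤ 1 := pow_le_one₀ (norm_nonneg _) hN1
  have h3 : ‖hat (fun a => (ν a : ℂ)) k‖ ^ e * ‖hat (fun a => (ν a : ℂ)) k‖ ≤ ‖hat (fun a => (ν a : ℂ)) k‖ :=
    mul_le_of_le_one_left (norm_nonneg _) this
  nlinarith [sq_nonneg (‖hat (fun a => ((√(ν a) : ℝ) : ℂ)) k‖)]

end DSR

namespace DSR

/-- Hellinger-type energy of the shift. -/
noncomputable def Df {p : ℕ} [NeZero p] (ν : ZMod p → ℝ) (u : ZMod p) : ℝ :=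
  1 - ∑ a, √(ν a) * √(ν (a + u))

lemma Df_eq {p : ℕ} [NeZero p] (ν : ZMod p → ℝ) (hν : ∀ a, 0 ≤ ν a) (h1 : ∑ a, ν a = 1)
    (u : ZMod p) : 2 * Df ν u = ∑ a, (√(ν a) - √(ν (a + u))) ^ 2 := by
  have e : ∀ a, (√(ν a) - √(ν (a + u))) ^ 2 = ν a + ν (a + u) - 2 * (√(ν a) * √(ν (a + u))) := by
    intro a
    nlinarith [Real.sq_sqrt (hν a), Real.sq_sqrt (hν (a + u))]
  have hs : ∑ a, ν (a + u) = 1 := by rw [← h1]; exact Equiv.sum_comp (Equiv.addRight u) ν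
  simp only [e, Finset.sum_sub_distrib, Finset.sum_add_distrib, ← Finset.mul_sum, hs, h1, Df]
  ring

lemma Df_nonneg {p : ℕ} [NeZero p] (ν : ZMod p → ℝ) (hν : ∀ a, 0 ≤ ν a) (h1 : ∑ a, ν a = 1)
    (u : ZMod p) : 0 ≤ Df ν u := by
  have := Df_eq ν hν h1 u
  have h2 : 0 ≤ ∑ a, (√(ν a) - √(ν (a + u))) ^ 2 := Finset.sum_nonneg fun a _ => sq_nonneg _
  linarith

lemma Df_mul {p : ℕ} [NeZero p] (ν : ZMod p → ℝ) (hν : ∀ a, 0 ≤ ν a) (h1 : ∑ a, ν a = 1)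
    (u : ZMod p) (j : ℕ) : Df ν (j * u) ≤ (j:ℝ) ^ 2 * Df ν u := by
  have h2 : ∀ a, (√(ν a) - √(ν (a + j * u))) ^ 2
      ≤ j * ∑ i ∈ range j, (√(ν (a + i * u)) - √(ν (a + i * u + u))) ^ 2 := by
    intro a
    have h3 : √(ν a) - √(ν (a + j * u))
        = ∑ i ∈ range j, (√(ν (a + i * u)) - √(ν (a + i * u + u))) := by
      have := Finset.sum_range_sub' (fun i : ℕ => √(ν (a + i * u))) j
      simp only [Nat.cast_zero, zero_mul, add_zero] at this
      rw [← this]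
      refine Finset.sum_congr rfl fun i _ => ?_
      congr 3
      push_cast; ring_nf
    rw [h3]
    have := sq_sum_le_card_mul_sum_sq (s := range j)
      (f := fun i : ℕ => √(ν (a + i * u)) - √(ν (a + i * u + u)))
    simpa using this
  have h4 : 2 * Df ν (j * u) ≤ (j:ℝ)^2 * (2 * Df ν u) := by
    rw [Df_eq ν hν h1]
    refine (Finset.sum_le_sum fun a _ => h2 a).trans (le_of_eq ?_)
    rw [← Finset.mul_sum, Finset.sum_comm]
    have h5 : ∀ i ∈ range j, ∑ a, (√(ν (a + i * u)) - √(ν (a + i * u + u))) ^ 2 = 2 * Df ν u := by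
      intro i _
      rw [Df_eq ν hν h1]
      exact Equiv.sum_comp (Equiv.addRight ((i:ZMod p) * u))
        (fun a => (√(ν a) - √(ν (a + u))) ^ 2)
    rw [Finset.sum_congr rfl h5]
    simp; ring
  linarith

lemma norm_hat_sq {p : ℕ} [NeZero p] (h : ZMod p → ℂ) (k : ZMod p) :
    hat h k * (starRingEnd ℂ) (hat h k) = ((‖hat h k‖ ^ 2 : ℝ) : ℂ) := by
  rw [Complex.mul_conj, Complex.normSq_eq_norm_sq]

lemma gap_A (d p : ℕ) [NeZero p] (hd : 3 ≤ d) (ν : ZMod p → ℝ) (hν : ∀ a, 0 ≤ ν a)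
    (h1 : ∑ a, ν a = 1) :
    ∑ k, ‖hat (fun a => ((√(ν a) : ℝ) : ℂ)) k‖ ^ 2 * (1 - ‖hat (fun a => (ν a : ℂ)) k‖)
      ≤ p * (1 - Qf d p ν) := by
  have h2 := Qf_le_fourier d p hd ν hν h1
  have h3 := plancherel (p := p) (fun a => ((√(ν a) : ℝ) : ℂ))
  have h4 : ∑ a, ‖((√(ν a) : ℝ) : ℂ)‖ ^ 2 = 1 := by
    rw [← h1]
    refine Finset.sum_congr rfl fun a _ => ?_
    rw [Complex.norm_real, Real.norm_of_nonneg (Real.sqrt_nonneg _), Real.sq_sqrt (hν a)]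
  rw [h4] at h3
  simp only [mul_sub, mul_one, Finset.sum_sub_distrib]
  linarith

lemma norm_N_le {p : ℕ} [NeZero p] (ν : ZMod p → ℝ) (hν : ∀ a, 0 ≤ ν a)
    (h1 : ∑ a, ν a = 1) (k : ZMod p) : ‖hat (fun a => (ν a : ℂ)) k‖ ≤ 1 := by
  refine (norm_hat_le _ _).trans (le_of_eq ?_)
  rw [← h1]
  refine Finset.sum_congr rfl fun a _ => ?_
  rw [Complex.norm_real, Real.norm_of_nonneg (hν a)]

lemma gap_B (d p : ℕ) [NeZero p] (hd : 3 ≤ d) (ν : ZMod p → ℝ) (hν : ∀ a, 0 ≤ ν a)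
    (h1 : ∑ a, ν a = 1) :
    ∑ t, ∑ s, ν t * ν s * Df ν (t - s) ≤ 2 * (1 - Qf d p ν) := by
  have hp : (0:ℝ) < p := by exact_mod_cast Nat.pos_of_ne_zero (NeZero.ne p)
  set f : ZMod p → ℂ := fun a => ((√(ν a) : ℝ) : ℂ) with hf
  set N : ZMod p → ℂ := fun a => (ν a : ℂ) with hN
  have hA := gap_A d p hd ν hν h1
  have h3 : ∑ k, ‖hat f k‖ ^ 2 = p := by
    rw [plancherel]
    have h4 : ∑ a, ‖((√(ν a) : ℝ) : ℂ)‖ ^ 2 = 1 := by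
      rw [← h1]
      refine Finset.sum_congr rfl fun a _ => ?_
      rw [Complex.norm_real, Real.norm_of_nonneg (Real.sqrt_nonneg _), Real.sq_sqrt (hν a)]
    rw [h4, mul_one]
  have h5 : ∑ k, ‖hat f k‖ ^ 2 * (1 - ‖hat N k‖ ^ 2) ≤ 2 * (p * (1 - Qf d p ν)) := by
    refine le_trans ?_ (mul_le_mul_of_nonneg_left hA (by norm_num))
    rw [Finset.mul_sum]
    refine Finset.sum_le_sum fun k _ => ?_
    have := norm_N_le ν hν h1 k
    have h0 := norm_nonneg (hat N k)
    have h6 : 1 - ‖hat N k‖ ^ 2 ≤ 2 * (1 - ‖hat N k‖) := by nlinarith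
    have := mul_le_mul_of_nonneg_left h6 (sq_nonneg (‖hat f k‖))
    linarith
  have h7 : ∑ k, ‖hat f k‖ ^ 2 * ‖hat N k‖ ^ 2
      = p * ∑ t, ∑ s, ν t * ν s * ∑ a, √(ν a) * √(ν (a + (t - s))) := by
    have h8 : ((∑ k, ‖hat f k‖ ^ 2 * ‖hat N k‖ ^ 2 : ℝ) : ℂ)
      = ((p * ∑ t, ∑ s, ν t * ν s * ∑ a, √(ν a) * √(ν (a + (t - s))) : ℝ) : ℂ) := by
      rw [Complex.ofReal_sum]
      have h9 : ∀ k, ((‖hat f k‖ ^ 2 * ‖hat N k‖ ^ 2 : ℝ) : ℂ) = ∑ t, ∑ s, (ν t * ν s : ℂ) *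
          ((hat f k * (starRingEnd ℂ) (hat f k)) * (ZMod.stdAddChar (k * (t - s)) : ℂ)) := by
        intro k
        rw [Complex.ofReal_mul, ← norm_hat_sq N, norm_hat_sq f]
        simp only [hat, map_sum, map_mul, conj_char, hN, Complex.conj_ofReal]
        rw [Finset.sum_mul_sum, Finset.mul_sum]
        refine Finset.sum_congr rfl fun a _ => ?_
        rw [Finset.mul_sum]
        refine Finset.sum_congr rfl fun b _ => ?_
        have : k * (a - b) = k * a + -(k * b) := by ring
        rw [this, AddChar.map_add_eq_mul]
        ring
      simp only [h9]
      rw [Finset.sum_comm, Complex.ofReal_mul, Complex.ofReal_sum, Finset.mul_sum]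
      refine Finset.sum_congr rfl fun t _ => ?_
      rw [Finset.sum_comm, Complex.ofReal_sum, Finset.mul_sum]
      refine Finset.sum_congr rfl fun s _ => ?_
      rw [← Finset.mul_sum, plancherel_shift]
      simp only [hf, Complex.conj_ofReal]
      push_cast
      ring
    exact_mod_cast h8
  simp only [mul_sub, mul_one, Finset.sum_sub_distrib, h3, h7] at h5
  have h10 : ∑ t, ∑ s, ν t * ν s * Df ν (t - s)
      = 1 - ∑ t, ∑ s, ν t * ν s * ∑ a, √(ν a) * √(ν (a + (t - s))) := by
    simp only [Df, mul_sub, mul_one, Finset.sum_sub_distrib]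
    rw [← Finset.sum_mul_sum, h1, one_mul]
  rw [h10]
  have h11 : p * (1 - ∑ t, ∑ s, ν t * ν s * ∑ a, √(ν a) * √(ν (a + (t - s))))
      ≤ p * (2 * (1 - Qf d p ν)) := by linarith
  exact le_of_mul_le_mul_left h11 hp

/-- near zero-concentrated case -/
lemma gap_near (d p : ℕ) [NeZero p] (hd : 3 ≤ d) (ν : ZMod p → ℝ) (hν : ∀ a, 0 ≤ ν a)
    (h1 : ∑ a, ν a = 1) (h0 : 1 - 1/64 ≤ ν 0) : (1 - ν 0) ≤ 8 * (1 - Qf d p ν) := by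
  have hB := gap_B d p hd ν hν h1
  have hle : ∀ a, ν a ≤ 1 := fun a => h1 ▸ Finset.single_le_sum (fun b _ => hν b) (mem_univ a)
  have hsplit : ∑ a ∈ univ.erase 0, ν a = 1 - ν 0 := by
    rw [← h1, ← Finset.add_sum_erase _ _ (mem_univ (0 : ZMod p))]; ring
  have hD : ∀ u : ZMod p, u ≠ 0 → 3/4 ≤ Df ν u := by
    intro u hu
    unfold Df
    have hu2 : ν u ≤ 1/64 := by
      have : ν u ≤ ∑ a ∈ univ.erase 0, ν a :=
        Finset.single_le_sum (fun b _ => hν b) (by simp [hu])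
      linarith
    have e1 : √(ν 0) * √(ν (0 + u)) ≤ 1/8 := by
      rw [zero_add]
      have : √(ν 0) ≤ 1 := by rw [Real.sqrt_le_left (by norm_num)]; simpa using hle 0
      have h2 : √(ν u) ≤ 1/8 := by
        rw [Real.sqrt_le_left (by norm_num)]; norm_num; linarith
      nlinarith [Real.sqrt_nonneg (ν 0), Real.sqrt_nonneg (ν u)]
    have e2 : ∑ a ∈ univ.erase 0, √(ν a) * √(ν (a + u)) ≤ 1/8 := by
      have hc := Finset.sum_mul_sq_le_sq_mul_sq (univ.erase (0 : ZMod p)) (fun a => √(ν a))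
        (fun a => √(ν (a + u)))
      simp only [Real.sq_sqrt (hν _)] at hc
      rw [hsplit] at hc
      have h3 : ∑ a ∈ univ.erase 0, ν (a + u) ≤ 1 := by
        have hs : ∑ a, ν (a + u) = 1 := by rw [← h1]; exact Equiv.sum_comp (Equiv.addRight u) ν
        rw [← hs]
        exact Finset.sum_le_sum_of_subset_of_nonneg (Finset.erase_subset _ _) (fun b _ _ => hν _)
      have h4 : (∑ a ∈ univ.erase 0, √(ν a) * √(ν (a + u))) ^ 2 ≤ (1/8)^2 := by
        have : (1 - ν 0) * ∑ a ∈ univ.erase 0, ν (a + u) ≤ (1/64) * 1 :=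
          mul_le_mul (by linarith) h3 (Finset.sum_nonneg fun a _ => hν _) (by norm_num)
        have e9 : ((1:ℝ)/8)^2 = 1/64*1 := by norm_num
        rw [e9]
        exact hc.trans this
      exact (abs_le.1 (abs_le_of_sq_le_sq h4 (by norm_num))).2
    rw [← Finset.add_sum_erase _ _ (mem_univ (0 : ZMod p))]
    linarith
  have h5 : ν 0 * (∑ s ∈ univ.erase 0, ν s) * (3/4) ≤ ∑ t, ∑ s, ν t * ν s * Df ν (t - s) := by
    have : ∑ s, ν 0 * ν s * Df ν (0 - s) ≤ ∑ t, ∑ s, ν t * ν s * Df ν (t - s) :=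
      Finset.single_le_sum (f := fun t => ∑ s, ν t * ν s * Df ν (t - s))
        (fun t _ => Finset.sum_nonneg fun s _ =>
          mul_nonneg (mul_nonneg (hν _) (hν _)) (Df_nonneg ν hν h1 _)) (mem_univ 0)
    refine le_trans ?_ this
    refine le_trans ?_ (Finset.sum_le_sum_of_subset_of_nonneg (Finset.erase_subset 0 _)
      (fun s _ _ => mul_nonneg (mul_nonneg (hν _) (hν _)) (Df_nonneg ν hν h1 _)))
    rw [Finset.mul_sum, Finset.sum_mul]
    refine Finset.sum_le_sum fun s hs => ?_
    refine mul_le_mul_of_nonneg_left (hD _ ?_) (mul_nonneg (hν _) (hν _))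
    simpa using (Finset.mem_erase.1 hs).1
  rw [hsplit] at h5
  have := hle 0
  nlinarith

/-- spread case -/
lemma gap_spread (d p : ℕ) [Fact p.Prime] (hd : 3 ≤ d) (ν : ZMod p → ℝ) (hν : ∀ a, 0 ≤ ν a)
    (h1 : ∑ a, ν a = 1) (ε : ℝ) (hε : 0 < ε) (hs : ∀ a, ν a ≤ 1 - ε)
    (hg : 32 * (p:ℝ)^2 * (1 - Qf d p ν) ≤ ε) :
    1 - (∑ a, √(ν a))^2 / p ≤ 2 * (1 - Qf d p ν) := by
  have hpp : p.Prime := Fact.out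
  have hp : (0:ℝ) < p := by exact_mod_cast hpp.pos
  have hB := gap_B d p hd ν hν h1
  have hne : (univ.erase (0 : ZMod p)).Nonempty := ⟨1, by simp⟩
  obtain ⟨u, hu, hmin⟩ := Finset.exists_min_image (univ.erase (0 : ZMod p)) (Df ν) hne
  have hu0 : u ≠ 0 := (Finset.mem_erase.1 hu).1
  have hDu : Df ν u * ε ≤ 2 * (1 - Qf d p ν) := by
    refine le_trans ?_ hB
    have h2 : ∀ t, ν t * (ε * Df ν u) ≤ ∑ s, ν t * ν s * Df ν (t - s) := by
      intro t
      have e1 : ∑ s ∈ univ.erase t, ν s = 1 - ν t := by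
        rw [← h1, ← Finset.add_sum_erase _ _ (mem_univ t)]; ring
      have e2 : ν t * ((∑ s ∈ univ.erase t, ν s) * Df ν u) ≤ ∑ s, ν t * ν s * Df ν (t - s) := by
        refine le_trans ?_ (Finset.sum_le_sum_of_subset_of_nonneg (Finset.erase_subset t _)
          (fun s _ _ => mul_nonneg (mul_nonneg (hν _) (hν _)) (Df_nonneg ν hν h1 _)))
        rw [Finset.sum_mul, Finset.mul_sum]
        refine Finset.sum_le_sum fun s hs => ?_
        rw [mul_assoc]
        refine mul_le_mul_of_nonneg_left (mul_le_mul_of_nonneg_left (hmin _ ?_) (hν _)) (hν _)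
        simp only [Finset.mem_erase, mem_univ, and_true]
        exact fun h => (Finset.mem_erase.1 hs).1 (sub_eq_zero.1 h).symm
      refine le_trans ?_ e2
      rw [e1]
      exact mul_le_mul_of_nonneg_left (mul_le_mul_of_nonneg_right (by linarith [hs t])
        (Df_nonneg ν hν h1 _)) (hν _)
    have h3 := Finset.sum_le_sum fun t (_ : t ∈ (univ : Finset (ZMod p))) => h2 t
    rw [← Finset.sum_mul, h1, one_mul] at h3
    linarith
  have hall : ∀ u', Df ν u' ≤ (p:ℝ)^2 * Df ν u := by
    intro u'
    have e : u' = ((u' / u).val : ZMod p) * u := by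
      rw [ZMod.natCast_zmod_val, div_mul_cancel₀ _ hu0]
    rw [e]
    refine (Df_mul ν hν h1 u _).trans ?_
    refine mul_le_mul_of_nonneg_right ?_ (Df_nonneg ν hν h1 _)
    have : (((u' / u).val : ℕ) : ℝ) ≤ p := by exact_mod_cast (ZMod.val_lt _).le
    gcongr
  set S := ∑ a, √(ν a) with hS
  have hSum : ∑ u', Df ν u' = p - S ^ 2 := by
    simp only [Df, Finset.sum_sub_distrib]
    rw [Finset.sum_comm]
    have : ∀ a, ∑ u', √(ν a) * √(ν (a + u')) = √(ν a) * S := by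
      intro a
      rw [← Finset.mul_sum]
      congr 1
      exact Equiv.sum_comp (Equiv.addLeft a) (fun a => √(ν a))
    simp only [this]
    rw [← Finset.sum_mul]
    simp [ZMod.card, sq, hS]
  set h := 1 - S^2 / p with hh
  have hph : p * h = p - S^2 := by rw [hh]; field_simp
  have hh2 : h ≤ (p:ℝ)^2 * Df ν u := by
    have : p * h ≤ p * ((p:ℝ)^2 * Df ν u) := by
      rw [hph, ← hSum]
      refine (Finset.sum_le_sum fun u' _ => hall u').trans (le_of_eq ?_)
      simp [ZMod.card]
    exact le_of_mul_le_mul_left this hp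
  have hh3 : h ≤ 1/16 := by
    have e1 : h * ε ≤ (p:ℝ)^2 * (2 * (1 - Qf d p ν)) := by
      calc h * ε ≤ ((p:ℝ)^2 * Df ν u) * ε := mul_le_mul_of_nonneg_right hh2 hε.le
        _ = (p:ℝ)^2 * (Df ν u * ε) := by ring
        _ ≤ _ := mul_le_mul_of_nonneg_left hDu (by positivity)
    have e2 : h * ε ≤ (1/16) * ε := by linarith
    exact le_of_mul_le_mul_right e2 hε
  have hsp : √(p:ℝ) ^ 2 = p := Real.sq_sqrt hp.le
  have hsp0 : 0 < √(p:ℝ) := Real.sqrt_pos.2 hp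
  have hNk : ∀ k : ZMod p, k ≠ 0 → ‖hat (fun a => (ν a : ℂ)) k‖ ≤ 1/2 := by
    intro k hk
    have e1 : hat (fun a => (ν a : ℂ)) k = hat (fun a => ((ν a - 1/p : ℝ) : ℂ)) k := by
      simp only [hat]
      have : ∀ a : ZMod p, (((ν a - 1/p : ℝ)) : ℂ) * (ZMod.stdAddChar (k * a) : ℂ)
          = (ν a : ℂ) * ZMod.stdAddChar (k * a) - (1/p) * ZMod.stdAddChar (a * k) := by
        intro a; push_cast; rw [mul_comm a k]; ring
      simp only [this, Finset.sum_sub_distrib, ← Finset.mul_sum, sum_char, if_neg hk]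
      simp
    rw [e1]
    refine (norm_hat_le _ _).trans ?_
    have e2 : ∀ a, ‖((ν a - 1/p : ℝ) : ℂ)‖ = |√(ν a) - 1/√p| * |√(ν a) + 1/√p| := by
      intro a
      rw [Complex.norm_real, Real.norm_eq_abs, ← abs_mul]
      congr 1
      have : (1 / √(p:ℝ))^2 = 1 / p := by rw [div_pow, hsp]; simp
      nlinarith [Real.sq_sqrt (hν a)]
    simp only [e2]
    have hc := Finset.sum_mul_sq_le_sq_mul_sq (univ : Finset (ZMod p)) (fun a => |√(ν a) - 1/√p|)
        (fun a => |√(ν a) + 1/√p|)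
    have hcard : ∑ a : ZMod p, (1/(p:ℝ)) = 1 := by simp [ZMod.card, hp.ne']
    have hq : (1 / √(p:ℝ))^2 = 1 / p := by rw [div_pow, hsp]; simp
    have e3 : ∑ a, |√(ν a) - 1/√p| ^ 2 = 2 - 2 * (S / √p) := by
      have : ∀ a, |√(ν a) - 1/√p| ^ 2 = ν a - 2 / √p * √(ν a) + 1/p := by
        intro a
        rw [sq_abs, sub_sq, Real.sq_sqrt (hν a), hq]; ring
      simp only [this, Finset.sum_add_distrib, Finset.sum_sub_distrib, h1, ← Finset.mul_sum, hcard]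
      rw [← hS]; ring
    have e4 : ∑ a, |√(ν a) + 1/√p| ^ 2 = 2 + 2 * (S / √p) := by
      have : ∀ a, |√(ν a) + 1/√p| ^ 2 = ν a + 2 / √p * √(ν a) + 1/p := by
        intro a
        rw [sq_abs, add_sq, Real.sq_sqrt (hν a), hq]; ring
      simp only [this, Finset.sum_add_distrib, h1, ← Finset.mul_sum, hcard]
      rw [← hS]; ring
    rw [e3, e4] at hc
    have hx' : (S / √p)^2 = S^2 / p := by rw [div_pow, hsp]
    have e5 : (2 - 2 * (S / √p)) * (2 + 2 * (S / √p)) = 4 * h := by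
      rw [hh, ← hx']; ring
    rw [e5] at hc
    have hf : (∑ a, |√(ν a) - 1/√p| * |√(ν a) + 1/√p|) ^ 2 ≤ (1/2)^2 := by
      refine hc.trans ?_; linarith
    exact (abs_le.1 (abs_le_of_sq_le_sq hf (by norm_num))).2
  have hA := gap_A d p hd ν hν h1
  set f : ZMod p → ℂ := fun a => ((√(ν a) : ℝ) : ℂ) with hf
  have h3 : ∑ k, ‖hat f k‖ ^ 2 = p := by
    rw [plancherel]
    have h4 : ∑ a, ‖((√(ν a) : ℝ) : ℂ)‖ ^ 2 = 1 := by
      rw [← h1]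
      refine Finset.sum_congr rfl fun a _ => ?_
      rw [Complex.norm_real, Real.norm_of_nonneg (Real.sqrt_nonneg _), Real.sq_sqrt (hν a)]
    rw [h4, mul_one]
  have hF0 : ‖hat f 0‖^2 = S^2 := by
    have : hat f 0 = ((S : ℝ) : ℂ) := by simp [hat, hf, hS]
    rw [this, Complex.norm_real, Real.norm_eq_abs, sq_abs]
  have h6 : ∑ k ∈ univ.erase 0, ‖hat f k‖ ^ 2 = p * h := by
    rw [hph, ← h3, ← hF0, ← Finset.add_sum_erase _ _ (mem_univ (0 : ZMod p))]; ring
  have h7 : ∑ k ∈ univ.erase 0, ‖hat f k‖ ^ 2 * (1/2) ≤ p * (1 - Qf d p ν) := by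
    refine le_trans ?_ hA
    refine le_trans (Finset.sum_le_sum fun k hk => ?_)
      (Finset.sum_le_sum_of_subset_of_nonneg (Finset.erase_subset 0 _) (fun k _ _ => mul_nonneg (sq_nonneg _) ?_))
    · exact mul_le_mul_of_nonneg_left (by linarith [hNk k (Finset.mem_erase.1 hk).1]) (sq_nonneg _)
    · linarith [norm_N_le ν hν h1 k]
  rw [← Finset.sum_mul, h6] at h7
  have : p * h ≤ p * (2 * (1 - Qf d p ν)) := by linarith
  exact le_of_mul_le_mul_left this hp

/-- shape of the profile in the bulk -/
lemma bulk_shape (p : ℕ) [NeZero p] (ν : ZMod p → ℝ) (hν : ∀ a, 0 ≤ ν a)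
    (h1 : ∑ a, ν a = 1) (g : ℝ) (hg : 1 - (∑ a, √(ν a))^2 / p ≤ 2 * g) (hpg : 64 * p * g ≤ 1) :
    (∀ a, 1 / 2 ≤ p * ν a ∧ p * ν a ≤ 2) ∧ p * ∑ a, ν a ^ 2 - 1 ≤ 21 * g := by
  have hp : (0:ℝ) < p := by exact_mod_cast Nat.pos_of_ne_zero (NeZero.ne p)
  have hsp : √(p:ℝ) ^ 2 = p := Real.sq_sqrt hp.le
  have hsp0 : 0 < √(p:ℝ) := Real.sqrt_pos.2 hp
  set S := ∑ a, √(ν a) with hS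
  have hS0 : 0 ≤ S := Finset.sum_nonneg fun a _ => Real.sqrt_nonneg _
  have hx : (S / √p)^2 = S^2 / p := by rw [div_pow, hsp]
  have hsum : ∑ a, (√p * √(ν a) - 1)^2 = 2 * p - 2 * p * (S / √p) := by
    have : ∀ a, (√p * √(ν a) - 1)^2 = p * ν a - 2 * √p * √(ν a) + 1 := by
      intro a; rw [sub_sq, mul_pow, hsp, Real.sq_sqrt (hν a)]; ring
    simp only [this, Finset.sum_add_distrib, Finset.sum_sub_distrib, ← Finset.mul_sum, h1]
    rw [← hS]
    simp only [sum_const, card_univ, ZMod.card, nsmul_eq_mul, mul_one]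
    have : p * (S / √p) = √p * S := by
      rw [mul_div_assoc', div_eq_iff hsp0.ne', mul_comm (√(p:ℝ)) S, mul_assoc, ← sq, hsp, mul_comm]
    linarith
  have hsum2 : ∑ a, (√p * √(ν a) - 1)^2 ≤ 4 * p * g := by
    rw [hsum]
    have hx0 : 0 ≤ S / √p := by positivity
    have hn : 0 ≤ 2 * p - 2 * p * (S / √p) := by
      rw [← hsum]; exact Finset.sum_nonneg fun a _ => sq_nonneg _
    have hx1 : S / √p ≤ 1 := by
      by_contra hc; push Not at hc; nlinarith
    rw [← hx] at hg
    have : 1 - S / √p ≤ 2 * g := by nlinarith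
    nlinarith
  have hpt : ∀ a, (√p * √(ν a) - 1)^2 ≤ (1/4)^2 := by
    intro a
    have := Finset.single_le_sum (f := fun a => (√p * √(ν a) - 1)^2) (fun b _ => sq_nonneg _) (mem_univ a)
    linarith
  have hpa : ∀ a, 3/4 ≤ √p * √(ν a) ∧ √p * √(ν a) ≤ 5/4 := by
    intro a
    have := abs_le.1 (abs_le_of_sq_le_sq (hpt a) (by norm_num))
    constructor <;> linarith [this.1, this.2]
  have hsq : ∀ a, (√p * √(ν a))^2 = p * ν a := by
    intro a; rw [mul_pow, hsp, Real.sq_sqrt (hν a)]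
  constructor
  · intro a
    have := hpa a
    rw [← hsq a]
    constructor <;> nlinarith
  · have e1 : p * (p * ∑ a, ν a ^ 2 - 1) = ∑ a, (p * ν a - 1)^2 := by
      have : ∀ a, (p * ν a - 1)^2 = p^2 * ν a^2 - 2 * p * ν a + 1 := by intro a; ring
      simp only [this, Finset.sum_add_distrib, Finset.sum_sub_distrib, ← Finset.mul_sum, h1]
      simp only [sum_const, card_univ, ZMod.card, nsmul_eq_mul, mul_one]
      ring
    have e2 : ∑ a, (p * ν a - 1)^2 ≤ ∑ a, (81/16) * (√p * √(ν a) - 1)^2 := by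
      refine Finset.sum_le_sum fun a _ => ?_
      rw [← hsq a]
      have := hpa a
      have e3 : ((√p * √(ν a))^2 - 1)^2 = (√p * √(ν a) + 1)^2 * (√p * √(ν a) - 1)^2 := by ring
      rw [e3]
      refine mul_le_mul_of_nonneg_right ?_ (sq_nonneg _)
      nlinarith
    rw [← Finset.mul_sum] at e2
    have hg0 : 0 ≤ p * g := by
      have : 0 ≤ ∑ a, (√p * √(ν a) - 1)^2 := Finset.sum_nonneg fun a _ => sq_nonneg _
      linarith
    have : p * (p * ∑ a, ν a ^ 2 - 1) ≤ p * (21 * g) := by rw [e1]; linarith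
    exact le_of_mul_le_mul_left this hp

end DSR

namespace DSR

lemma stirlingSeq_upper (m : ℕ) (hm : 1 ≤ m) :
    Stirling.stirlingSeq m ≤ √Real.pi * Real.exp (1 / (12 * m)) := by
  have key : ∀ j : ℕ, Real.log (Stirling.stirlingSeq m) - Real.log (Stirling.stirlingSeq (m + j))
      ≤ 1 / (12 * m) - 1 / (12 * ((m:ℝ) + j)) := by
    intro j
    induction j with
    | zero => simp
    | succ j ih =>
      have h := Stirling.log_stirlingSeq_sdiff_le (m + j)
      have hmj : (0:ℝ) < m + j := by positivity
      have e : 1 / (12 * ((m + j : ℕ):ℝ) * (((m + j : ℕ):ℝ) + 1))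
          = 1 / (12 * ((m:ℝ) + j)) - 1 / (12 * ((m:ℝ) + (j + 1 : ℕ))) := by
        push_cast
        field_simp
        ring
      rw [e] at h
      rw [show m + (j + 1) = m + j + 1 by ring]
      linarith
  have hlim : Filter.Tendsto (fun j => Stirling.stirlingSeq (m + j)) Filter.atTop (nhds (√Real.pi)) := by
    have := (Filter.tendsto_add_atTop_iff_nat m).2 Stirling.tendsto_stirlingSeq_sqrt_pi
    simpa [add_comm] using this
  have hpos : ∀ j, 0 < Stirling.stirlingSeq (m + j) := by
    intro j
    obtain ⟨l, rfl⟩ := Nat.exists_eq_add_of_le hm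
    rw [show 1 + l + j = (l + j) + 1 by ring]
    exact Stirling.stirlingSeq'_pos _
  have hb : ∀ j, Stirling.stirlingSeq m * Real.exp (-(1 / (12 * m))) ≤ Stirling.stirlingSeq (m + j) := by
    intro j
    have h0 := hpos 0
    rw [add_zero] at h0
    rw [← Real.log_le_log_iff (by positivity) (hpos j), Real.log_mul h0.ne' (Real.exp_pos _).ne',
      Real.log_exp]
    have := key j
    have h2 : 0 ≤ 1 / (12 * ((m:ℝ) + j)) := by positivity
    linarith
  have := ge_of_tendsto' hlim hb
  have h3 := mul_le_mul_of_nonneg_right this (Real.exp_pos (1 / (12 * (m:ℝ)))).le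
  rwa [mul_assoc, ← Real.exp_add, neg_add_cancel, Real.exp_zero, mul_one] at h3

lemma fact_upper (m : ℕ) (hm : 1 ≤ m) :
    (m.factorial : ℝ) ≤ √(2 * Real.pi * m) * (m / Real.exp 1) ^ m * Real.exp (1 / (12 * m)) := by
  have h := stirlingSeq_upper m hm
  have hm0 : (0:ℝ) < m := by exact_mod_cast hm
  unfold Stirling.stirlingSeq at h
  rw [div_le_iff₀ (by positivity)] at h
  refine h.trans (le_of_eq ?_)
  have : √(2 * Real.pi * m) = √Real.pi * √(2 * m) := by
    rw [← Real.sqrt_mul Real.pi_pos.le]; congr 1; ring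
  rw [this]; ring

lemma fact_crude (m : ℕ) : (m.factorial : ℝ) ≤ 3 * (m + 1) * (m / Real.exp 1) ^ m := by
  rcases Nat.eq_zero_or_pos m with rfl | hm
  · simp
  · have hm0 : (1:ℝ) ≤ m := by exact_mod_cast hm
    have h := fact_upper m hm
    have h1 : Real.exp (1 / (12 * m)) ≤ 12/11 := by
      have e1 : (1:ℝ) / (12 * m) ≤ 1/12 := by
        apply one_div_le_one_div_of_le <;> linarith
      have := Real.exp_bound_div_one_sub_of_interval (x := 1/12) (by norm_num) (by norm_num)
      refine (Real.exp_le_exp.2 e1).trans (this.trans (by norm_num))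
    have h2 : √(2 * Real.pi * m) ≤ 2.6 * m := by
      rw [Real.sqrt_le_left (by positivity)]
      have := Real.pi_lt_d2
      nlinarith
    refine h.trans ?_
    have h3 : √(2 * Real.pi * m) * Real.exp (1 / (12 * m)) ≤ 3 * (m + 1) := by
      calc _ ≤ (2.6 * (m:ℝ)) * (12/11) := by gcongr
        _ ≤ _ := by nlinarith
    have h4 : 0 ≤ (m / Real.exp 1) ^ m := by positivity
    nlinarith [mul_le_mul_of_nonneg_right h3 h4]

/-- the type of a vector -/
def tp {n p : ℕ} (v : Fin n → ZMod p) (a : ZMod p) : ℕ := (Finset.univ.filter (fun i => v i = a)).card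

noncomputable def nu (n : ℕ) {p : ℕ} (t : ZMod p → ℕ) (a : ZMod p) : ℝ := t a / n

def Wc (n d p : ℕ) [NeZero p] (t : ZMod p → ℕ) : ℕ :=
  (Finset.univ.filter (fun w : Fin n × Fin d → ZMod p => (∀ k, ∑ i, w (k, i) = 0) ∧
      ∀ a, (Finset.univ.filter (fun y => w y = a)).card = d * t a)).card

lemma sum_tp {n p : ℕ} [NeZero p] (v : Fin n → ZMod p) : ∑ a, tp v a = n := by
  have := Finset.card_eq_sum_card_fiberwise (s := (univ : Finset (Fin n))) (t := (univ : Finset (ZMod p)))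
    (f := v) (fun _ _ => by simp)
  simp only [card_univ, Fintype.card_fin] at this
  exact this.symm

lemma tp_le {n p : ℕ} (v : Fin n → ZMod p) (a : ZMod p) : tp v a ≤ n := by
  refine (Finset.card_le_univ _).trans (by simp)

lemma nu_nonneg (n : ℕ) {p : ℕ} (t : ZMod p → ℕ) (a : ZMod p) : 0 ≤ nu n t a := by
  unfold nu; positivity

lemma sum_nu (n : ℕ) {p : ℕ} [NeZero p] (t : ZMod p → ℕ) (hn : 1 ≤ n) (ht : ∑ a, t a = n) :
    ∑ a, nu n t a = 1 := by
  unfold nu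
  rw [← Finset.sum_div, ← Nat.cast_sum, ht, div_self]
  exact_mod_cast (by omega : n ≠ 0)

lemma goodCnt_le (n d p : ℕ) [NeZero p] (v : Fin n → ZMod p) :
    goodCnt n d p v ≤ (∏ a, (d * tp v a).factorial) * Wc n d p (tp v) := by
  have h := perm_count (fun x : Fin n × Fin d => v x.1) (fun w => ∀ k, ∑ i, w (k, i) = 0)
  simp only [card_lift] at h
  exact h

lemma prod_fact_crude (n d p : ℕ) [NeZero p] (hd : 1 ≤ d) (t : ZMod p → ℕ) (hn : 1 ≤ n)
    (ht : ∑ a, t a = n) :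
    ∏ a, ((d * t a).factorial : ℝ) ≤ (3 * (n * d + 1)) ^ p * (n * d).factorial *
      ∏ a, nu n t a ^ (d * t a) := by
  have hn0 : (0:ℝ) < n := by exact_mod_cast hn
  have hd0 : (0:ℝ) < d := by exact_mod_cast hd
  have hle : ∀ a, t a ≤ n := fun a => ht ▸ Finset.single_le_sum (fun _ _ => Nat.zero_le _) (mem_univ a)
  have h1 : ∀ a, ((d * t a).factorial : ℝ) ≤ (3 * (n * d + 1)) *
      ((n * d / Real.exp 1) ^ (d * t a) * nu n t a ^ (d * t a)) := by
    intro a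
    refine (fact_crude _).trans ?_
    rw [← mul_pow]
    have e : ((d * t a : ℕ) : ℝ) / Real.exp 1 = n * d / Real.exp 1 * nu n t a := by
      unfold nu; push_cast; field_simp
    rw [e]
    have h2 : ((d * t a : ℕ) : ℝ) ≤ n * d := by
      have := hle a
      push_cast
      rw [mul_comm]
      gcongr
    have := nu_nonneg n t a
    gcongr
  refine (Finset.prod_le_prod (fun a _ => by positivity) (fun a _ => h1 a)).trans ?_
  rw [Finset.prod_mul_distrib, Finset.prod_const, Finset.card_univ,
    ZMod.card, Finset.prod_mul_distrib, Finset.prod_pow_eq_pow_sum, ← Finset.mul_sum, ht, mul_assoc]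
  have h3 : ((n:ℝ) * d / Real.exp 1) ^ (d * n) ≤ (n * d).factorial := by
    have := Stirling.le_factorial_stirling (n * d)
    refine le_trans ?_ this
    rw [mul_comm d n]
    push_cast
    refine le_mul_of_one_le_left (by positivity) ?_
    rw [Real.one_le_sqrt]
    have h5 : (1:ℝ) ≤ n * d := by exact_mod_cast Nat.mul_pos hn hd
    nlinarith [Real.pi_gt_three]
  have h4 : 0 ≤ ∏ a, nu n t a ^ (d * t a) := Finset.prod_nonneg fun a _ => pow_nonneg (nu_nonneg n t a) _
  gcongr

lemma Wc_bound (n d p : ℕ) [NeZero p] (hd : 1 ≤ d) (t : ZMod p → ℕ) :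
    (Wc n d p t : ℝ) * ∏ a, nu n t a ^ ((d - 1) * t a) ≤ Qf d p (nu n t) ^ n := by
  have hd0 : (0:ℝ) < d := by exact_mod_cast hd
  have h := type_bound (κ := ZMod p) n d (fun u => ∑ i, u i = 0)
    (fun a => nu n t a ^ (((d : ℝ) - 1) / d)) (fun a => Real.rpow_nonneg (nu_nonneg n t a) _)
    (fun a => d * t a)
  have e : ∀ a, (nu n t a ^ (((d : ℝ) - 1) / d)) ^ (d * t a) = nu n t a ^ ((d - 1) * t a) := by
    intro a
    rw [← Real.rpow_natCast, ← Real.rpow_natCast, ← Real.rpow_mul (nu_nonneg n t a)]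
    congr 1
    push_cast [Nat.cast_sub hd]
    field_simp
  simp only [e] at h
  exact h

lemma card_type (n p : ℕ) [NeZero p] (t : ZMod p → ℕ) (hn : 1 ≤ n) (ht : ∑ a, t a = n) :
    ((univ.filter (fun v : Fin n → ZMod p => tp v = t)).card : ℝ) * ∏ a, nu n t a ^ t a ≤ 1 := by
  have h : ∑ v : Fin n → ZMod p, ∏ i, nu n t (v i) = 1 := by
    have := Finset.prod_univ_sum (fun _ : Fin n => (univ : Finset (ZMod p))) (fun _ a => nu n t a)
    rw [Fintype.piFinset_univ] at this
    rw [← this, sum_nu n t hn ht]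
    simp
  rw [← h, ← nsmul_eq_mul, ← Finset.sum_const]
  refine le_trans (le_of_eq ?_) (Finset.sum_le_sum_of_subset_of_nonneg
    (Finset.filter_subset (fun v : Fin n → ZMod p => tp v = t) _)
    (fun v _ _ => Finset.prod_nonneg fun i _ => nu_nonneg n t _))
  refine Finset.sum_congr rfl fun v hv => ?_
  have hv' := (Finset.mem_filter.1 hv).2
  rw [prod_type]
  refine Finset.prod_congr rfl fun a _ => ?_
  rw [← congrFun hv' a]; rfl

lemma mid_one (n d p : ℕ) [NeZero p] (hd : 1 ≤ d) (t : ZMod p → ℕ) (hn : 1 ≤ n)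
    (ht : ∑ a, t a = n) :
    ((univ.filter (fun v : Fin n → ZMod p => tp v = t)).card : ℝ) *
      ((∏ a, ((d * t a).factorial : ℝ)) * Wc n d p t)
      ≤ (3 * (n * d + 1)) ^ p * (n * d).factorial * Qf d p (nu n t) ^ n := by
  have h1 := prod_fact_crude n d p hd t hn ht
  have h2 := Wc_bound n d p hd t
  have h3 := card_type n p t hn ht
  set A := ∏ a, nu n t a ^ ((d - 1) * t a)
  set B := ∏ a, nu n t a ^ t a
  have hAB : ∏ a, nu n t a ^ (d * t a) = A * B := by
    rw [← Finset.prod_mul_distrib]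
    refine Finset.prod_congr rfl fun a _ => ?_
    rw [← pow_add]
    congr 1
    obtain ⟨e, rfl⟩ := Nat.exists_eq_add_of_le hd
    simp; ring
  have hpos : 0 < ∏ a, nu n t a ^ (d * t a) := by
    refine Finset.prod_pos fun a _ => ?_
    rcases Nat.eq_zero_or_pos (t a) with h | h
    · simp [h]
    · have : 0 < nu n t a := by
        unfold nu
        have : (0:ℝ) < n := by exact_mod_cast hn
        have : (0:ℝ) < t a := by exact_mod_cast h
        positivity
      positivity
  set V := ((univ.filter (fun v : Fin n → ZMod p => tp v = t)).card : ℝ)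
  set F := ∏ a, ((d * t a).factorial : ℝ)
  have hA : 0 ≤ A := Finset.prod_nonneg fun a _ => pow_nonneg (nu_nonneg n t a) _
  have hB : 0 ≤ B := Finset.prod_nonneg fun a _ => pow_nonneg (nu_nonneg n t a) _
  have hF : 0 ≤ F := Finset.prod_nonneg fun a _ => by positivity
  have hQ : 0 ≤ Qf d p (nu n t) := Finset.sum_nonneg fun u _ => Finset.prod_nonneg fun i _ =>
    Real.rpow_nonneg (nu_nonneg n t _) _
  have hV : 0 ≤ V := by positivity
  rw [hAB] at h1 hpos
  refine le_of_mul_le_mul_right ?_ hpos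
  have h4 : (V * B) * (Wc n d p t * A) ≤ 1 * Qf d p (nu n t) ^ n :=
    mul_le_mul h3 h2 (by positivity) (by norm_num)
  calc V * (F * Wc n d p t) * (A * B) = F * ((V * B) * (Wc n d p t * A)) := by ring
    _ ≤ ((3 * (n * d + 1)) ^ p * (n * d).factorial * (A * B)) * (1 * Qf d p (nu n t) ^ n) :=
        mul_le_mul h1 h4 (by positivity) (by positivity)
    _ = _ := by ring

lemma mid_total (n d p : ℕ) [NeZero p] (hd : 1 ≤ d) (hn : 1 ≤ n) (γ : ℝ)
    (S : Finset (Fin n → ZMod p)) (hS : ∀ v ∈ S, Qf d p (nu n (tp v)) ≤ 1 - γ) :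
    ∑ v ∈ S, (goodCnt n d p v : ℝ)
      ≤ (n + 1) ^ p * ((3 * (n * d + 1)) ^ p * Real.exp (-γ * n)) * (n * d).factorial := by
  set Bd : (ZMod p → ℕ) → ℝ := fun t => (∏ a, ((d * t a).factorial : ℝ)) * Wc n d p t with hBd
  have h1 : ∑ v ∈ S, (goodCnt n d p v : ℝ) ≤ ∑ v ∈ S, Bd (tp v) := by
    refine Finset.sum_le_sum fun v _ => ?_
    have := goodCnt_le n d p v
    rw [hBd]
    simp only
    exact_mod_cast this
  refine h1.trans ?_
  rw [Finset.sum_comp Bd tp]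
  have h2 : ∀ t ∈ S.image tp, (S.filter (fun v => tp v = t)).card • Bd t
      ≤ (3 * (n * d + 1)) ^ p * (n * d).factorial * Real.exp (-γ * n) := by
    intro t htm
    obtain ⟨v, hv, rfl⟩ := Finset.mem_image.1 htm
    have h3 := mid_one n d p hd (tp v) hn (sum_tp v)
    have hB0 : 0 ≤ Bd (tp v) := by rw [hBd]; positivity
    rw [nsmul_eq_mul]
    have h4 : ((S.filter (fun v' => tp v' = tp v)).card : ℝ)
        ≤ ((univ.filter (fun v' : Fin n → ZMod p => tp v' = tp v)).card : ℝ) := by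
      exact_mod_cast Finset.card_le_card (Finset.filter_subset_filter _ (Finset.subset_univ _))
    refine (mul_le_mul_of_nonneg_right h4 hB0).trans (h3.trans ?_)
    refine mul_le_mul_of_nonneg_left ?_ (by positivity)
    have hQ : 0 ≤ Qf d p (nu n (tp v)) := Finset.sum_nonneg fun u _ => Finset.prod_nonneg fun i _ =>
      Real.rpow_nonneg (nu_nonneg n _ _) _
    have h5 : Qf d p (nu n (tp v)) ≤ Real.exp (-γ) := by
      have := Real.add_one_le_exp (-γ)
      linarith [hS v hv]
    calc _ ≤ Real.exp (-γ) ^ n := pow_le_pow_left₀ hQ h5 n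
      _ = _ := by rw [← Real.exp_nat_mul]; ring_nf
  refine (Finset.sum_le_sum h2).trans ?_
  rw [Finset.sum_const, nsmul_eq_mul]
  have h6 : ((S.image tp).card : ℝ) ≤ (n + 1) ^ p := by
    have : (S.image tp) ⊆ Fintype.piFinset (fun _ : ZMod p => range (n + 1)) := by
      intro t ht
      obtain ⟨v, hv, rfl⟩ := Finset.mem_image.1 ht
      simp only [Fintype.mem_piFinset, mem_range]
      exact fun a => Nat.lt_succ_of_le (tp_le v a)
    have := Finset.card_le_card this
    rw [Fintype.card_piFinset] at this
    simp only [card_range, prod_const, card_univ, ZMod.card] at this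
    exact_mod_cast this
  calc _ ≤ ((n:ℝ) + 1) ^ p * ((3 * (n * d + 1)) ^ p * (n * d).factorial * Real.exp (-γ * n)) :=
        mul_le_mul_of_nonneg_right h6 (by positivity)
    _ = _ := by ring

end DSR

namespace DSR

/-- collision sum -/
noncomputable def Kr {κ : Type*} [Fintype κ] [DecidableEq κ] (ν : κ → ℝ) (r : ℕ) : ℝ :=
  ∑ μ ∈ piAntidiag (univ : Finset κ) r, (Nat.multinomial univ μ : ℝ) ^ 2 * ∏ a, ν a ^ (2 * μ a)

/-- sign average -/
noncomputable def Tf {κ : Type*} [Fintype κ] [DecidableEq κ] (ν : κ → ℝ) (L : ℕ) : ℝ :=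
  (1/2)^(Fintype.card κ) * ∑ e ∈ Fintype.piFinset (fun _ : κ => ({1, -1} : Finset ℝ)), |∑ a, e a * ν a| ^ L

lemma multinomial_real {κ : Type*} [Fintype κ] (μ : κ → ℕ) (L : ℕ) (h : ∑ a, μ a = L) :
    (Nat.multinomial univ μ : ℝ) = L.factorial / ∏ a, ((μ a).factorial : ℝ) := by
  have := Nat.multinomial_spec univ μ
  rw [h] at this
  rw [eq_div_iff (by positivity), mul_comm]
  exact_mod_cast this

lemma par_lemma {κ : Type*} [Fintype κ] [DecidableEq κ] (ν : κ → ℝ) (hν : ∀ a, 0 ≤ ν a)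
    (L : ℕ) (q : κ → ℕ) :
    ∑ l ∈ (piAntidiag (univ : Finset κ) L).filter (fun l => ∀ a, Even (l a + q a)),
      (Nat.multinomial univ l : ℝ) * ∏ a, ν a ^ l a ≤ Tf ν L := by
  set Sg := Fintype.piFinset (fun _ : κ => ({1, -1} : Finset ℝ)) with hSg
  have habs : ∀ e ∈ Sg, |∏ a, e a ^ q a| = 1 := by
    intro e he
    rw [Finset.abs_prod]
    refine Finset.prod_eq_one fun a _ => ?_
    have := Fintype.mem_piFinset.1 he a
    simp only [mem_insert, mem_singleton] at this
    rcases this with h | h <;> simp [h]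
  have h1 : ∑ e ∈ Sg, (∏ a, e a ^ q a) * (∑ a, e a * ν a) ^ L ≤ ∑ e ∈ Sg, |∑ a, e a * ν a| ^ L := by
    refine Finset.sum_le_sum fun e he => ?_
    refine (le_abs_self _).trans ?_
    rw [abs_mul, habs e he, one_mul, abs_pow]
  have h2 : ∑ e ∈ Sg, (∏ a, e a ^ q a) * (∑ a, e a * ν a) ^ L
      = ∑ l ∈ piAntidiag (univ : Finset κ) L, ((Nat.multinomial univ l : ℝ) * ∏ a, ν a ^ l a) *
        ∏ a, (1 + (-1 : ℝ) ^ (l a + q a)) := by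
    simp only [Finset.sum_pow_eq_sum_piAntidiag, Finset.mul_sum]
    rw [Finset.sum_comm]
    refine Finset.sum_congr rfl fun l _ => ?_
    have h3 : ∏ a, (1 + (-1 : ℝ) ^ (l a + q a)) = ∑ e ∈ Sg, ∏ a, e a ^ (l a + q a) := by
      have := Finset.prod_univ_sum (fun _ : κ => ({1, -1} : Finset ℝ)) (fun a x => x ^ (l a + q a))
      rw [hSg, ← this]
      refine Finset.prod_congr rfl fun a _ => ?_
      rw [Finset.sum_pair (by norm_num)]
      simp
    rw [h3, Finset.mul_sum]
    refine Finset.sum_congr rfl fun e _ => ?_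
    simp only [mul_pow, pow_add, Finset.prod_mul_distrib]
    ring
  have h4 : ∑ l ∈ (piAntidiag (univ : Finset κ) L).filter (fun l => ∀ a, Even (l a + q a)),
      ((Nat.multinomial univ l : ℝ) * ∏ a, ν a ^ l a) * 2 ^ (Fintype.card κ)
      ≤ ∑ l ∈ piAntidiag (univ : Finset κ) L, ((Nat.multinomial univ l : ℝ) * ∏ a, ν a ^ l a) *
        ∏ a, (1 + (-1 : ℝ) ^ (l a + q a)) := by
    refine le_trans (le_of_eq ?_) (Finset.sum_le_sum_of_subset_of_nonneg (Finset.filter_subset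
      (fun l : κ → ℕ => ∀ a, Even (l a + q a)) _) (fun l _ _ => ?_))
    · refine Finset.sum_congr rfl fun l hl => ?_
      have := (Finset.mem_filter.1 hl).2
      congr 1
      rw [Finset.prod_congr rfl (g := fun _ => (2:ℝ))]
      · simp
      · intro a _
        rw [(this a).neg_one_pow]; norm_num
    · refine mul_nonneg (mul_nonneg (by positivity) (Finset.prod_nonneg fun a _ => pow_nonneg (hν a) _))
        (Finset.prod_nonneg fun a _ => ?_)
      rcases neg_one_pow_eq_or ℝ (l a + q a) with h | h <;> rw [h] <;> norm_num
  rw [← Finset.sum_mul] at h4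
  unfold Tf
  rw [one_div, inv_pow, inv_mul_eq_div, le_div_iff₀ (by positivity)]
  exact h4.trans (h2 ▸ h1)

lemma Tf_nonneg {κ : Type*} [Fintype κ] [DecidableEq κ] (ν : κ → ℝ) (L : ℕ) : 0 ≤ Tf ν L := by
  unfold Tf; positivity

lemma Tf_anti {κ : Type*} [Fintype κ] [DecidableEq κ] (ν : κ → ℝ) (hν : ∀ a, 0 ≤ ν a)
    (h1 : ∑ a, ν a = 1) (L M : ℕ) : Tf ν (L + M) ≤ Tf ν L := by
  unfold Tf
  refine mul_le_mul_of_nonneg_left (Finset.sum_le_sum fun e he => ?_) (by positivity)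
  refine pow_le_pow_of_le_one (abs_nonneg _) ?_ (by omega)
  refine (Finset.abs_sum_le_sum_abs _ _).trans ?_
  rw [← h1]
  refine Finset.sum_le_sum fun a _ => ?_
  have := Fintype.mem_piFinset.1 he a
  simp only [mem_insert, mem_singleton] at this
  rcases this with h | h <;> simp [h, abs_of_nonneg (hν a)]

lemma shift_sum {κ : Type*} [Fintype κ] [DecidableEq κ] (ν : κ → ℝ) (hν : ∀ a, 0 < ν a)
    (h1 : ∑ a, ν a = 1) (r : ℕ) (hr : 1 ≤ r) (c : κ → ℕ) :
    ((2 * r).factorial : ℝ) * ∑ μ ∈ piAntidiag (univ : Finset κ) r,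
      ∏ a, (ν a ^ (2 * μ a) / ((2 * μ a + c a).factorial : ℝ))
      ≤ Tf ν (2 * r) * ∏ a, (1 / (2 * r * ν a)) ^ c a := by
  set C := ∑ a, c a with hC
  have hr0 : (0:ℝ) < r := by exact_mod_cast hr
  have h2 : ∑ μ ∈ piAntidiag (univ : Finset κ) r,
      ((2 * r + C).factorial : ℝ) * ∏ a, (ν a ^ (2 * μ a + c a) / ((2 * μ a + c a).factorial : ℝ))
      ≤ Tf ν (2 * r + C) := by
    refine le_trans ?_ (par_lemma ν (fun a => (hν a).le) (2 * r + C) c)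
    have hmem : ∀ μ ∈ piAntidiag (univ : Finset κ) r, (fun a => 2 * μ a + c a) ∈
        (piAntidiag (univ : Finset κ) (2 * r + C)).filter (fun l => ∀ a, Even (l a + c a)) := by
      intro μ hμ
      have hs := (mem_piAntidiag.1 hμ).1
      simp only [mem_filter, mem_piAntidiag, mem_univ, implies_true, and_true]
      refine ⟨?_, fun a => ⟨μ a + c a, by ring⟩⟩
      rw [Finset.sum_add_distrib, ← Finset.mul_sum, hs]
    have hinj : Set.InjOn (fun (μ : κ → ℕ) => (fun a => 2 * μ a + c a)) (piAntidiag (univ : Finset κ) r) := by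
      intro μ _ μ' _ h
      funext a
      have := congrFun h a
      simp only at this
      omega
    calc _ = ∑ μ ∈ piAntidiag (univ : Finset κ) r, (fun l : κ → ℕ => (Nat.multinomial univ l : ℝ) * ∏ a, ν a ^ l a)
            (fun a => 2 * μ a + c a) := by
          refine Finset.sum_congr rfl fun μ hμ => ?_
          have hs := (mem_piAntidiag.1 (mem_filter.1 (hmem μ hμ)).1).1
          simp only
          rw [multinomial_real _ _ hs, Finset.prod_div_distrib]
          ring
      _ = ∑ l ∈ (piAntidiag (univ : Finset κ) r).image (fun (μ : κ → ℕ) => (fun a => 2 * μ a + c a)),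
            (Nat.multinomial univ l : ℝ) * ∏ a, ν a ^ l a := by
          rw [Finset.sum_image hinj]
      _ ≤ _ := by
          refine Finset.sum_le_sum_of_subset_of_nonneg ?_ (fun l _ _ => mul_nonneg (by positivity)
            (Finset.prod_nonneg fun a _ => pow_nonneg (hν a).le _))
          intro l hl
          obtain ⟨μ, hμ, rfl⟩ := Finset.mem_image.1 hl
          exact hmem μ hμ
  have h3 := h2.trans (Tf_anti ν (fun a => (hν a).le) h1 (2 * r) C)
  have h4 : ((2 * r).factorial : ℝ) * (2 * r) ^ C ≤ (2 * r + C).factorial := by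
    have := Nat.factorial_mul_pow_le_factorial (m := 2 * r) (n := C)
    have h5 : (((2 * r).factorial * (2 * r + 1) ^ C : ℕ) : ℝ) ≤ (2 * r + C).factorial := by exact_mod_cast this
    refine le_trans ?_ h5
    push_cast
    gcongr
    linarith
  have hP : 0 < ∏ a, (2 * r * ν a) ^ c a := Finset.prod_pos fun a _ => by have := hν a; positivity
  have h6 : ∏ a, (1 / (2 * r * ν a)) ^ c a = 1 / ∏ a, (2 * r * ν a) ^ c a := by
    simp only [div_pow, one_pow, Finset.prod_div_distrib, Finset.prod_const_one]
  rw [h6, mul_one_div, le_div_iff₀ hP]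
  refine le_trans ?_ h3
  rw [Finset.mul_sum, Finset.sum_mul]
  refine Finset.sum_le_sum fun μ _ => ?_
  have h7 : ∏ a, (2 * r * ν a) ^ c a = (2 * r : ℝ) ^ C * ∏ a, ν a ^ c a := by
    simp only [mul_pow, Finset.prod_mul_distrib, Finset.prod_pow_eq_pow_sum, hC]
  have h8 : ∏ a, (ν a ^ (2 * μ a + c a) / ((2 * μ a + c a).factorial : ℝ))
      = (∏ a, (ν a ^ (2 * μ a) / ((2 * μ a + c a).factorial : ℝ))) * ∏ a, ν a ^ c a := by
    rw [← Finset.prod_mul_distrib]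
    refine Finset.prod_congr rfl fun a _ => ?_
    rw [pow_add]; ring
  rw [h7, h8]
  have h9 : 0 ≤ (∏ a, (ν a ^ (2 * μ a) / ((2 * μ a + c a).factorial : ℝ))) * ∏ a, ν a ^ c a :=
    mul_nonneg (Finset.prod_nonneg fun a _ => by have := hν a; positivity)
      (Finset.prod_nonneg fun a _ => by have := hν a; positivity)
  calc _ = (((2 * r).factorial : ℝ) * (2 * r) ^ C) * ((∏ a, (ν a ^ (2 * μ a) / ((2 * μ a + c a).factorial : ℝ))) * ∏ a, ν a ^ c a) := by ring
    _ ≤ _ := mul_le_mul_of_nonneg_right h4 h9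

noncomputable def Bm (m : ℕ) : ℝ := ((2 * m).factorial : ℝ) / (4 ^ m * (m.factorial : ℝ) ^ 2)

lemma Bm_pos (m : ℕ) : 0 < Bm m := by unfold Bm; positivity

lemma Bm_sq (m : ℕ) : Bm m ^ 2 * ((2 * m + 1) * Real.Wallis.W m) = 1 := by
  rw [Real.Wallis.W_eq_factorial_ratio]
  unfold Bm
  have : (2:ℝ) ^ (4 * m) = (4 ^ m) ^ 2 := by
    rw [← pow_mul, show (4:ℝ) = 2 ^ 2 by norm_num, ← pow_mul]; congr 1; ring
  rw [this]
  have h1 : (0:ℝ) < 2 * m + 1 := by positivity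
  field_simp

lemma Bm_upper (m : ℕ) : Bm m ^ 2 / ((2 * m).factorial : ℝ)
    ≤ (2 / Real.pi) * (1 / ((2 * m + 1).factorial : ℝ) + 2 / ((2 * m + 2).factorial : ℝ)) := by
  have h := Bm_sq m
  have hW := Real.Wallis.le_W m
  have hpi := Real.pi_pos
  have hm : (0:ℝ) ≤ m := by positivity
  have hb : Bm m ^ 2 ≤ (2 / Real.pi) * (1 / (2 * m + 1) + 2 / ((2 * m + 1) * (2 * m + 2))) := by
    have h2 : Bm m ^ 2 * ((2 * m + 1) * (((2 : ℝ) * m + 1) / (2 * m + 2) * (Real.pi / 2))) ≤ 1 := by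
      refine le_trans ?_ h.le
      gcongr
    have h3 : Bm m ^ 2 ≤ 1 / ((2 * m + 1) * (((2 : ℝ) * m + 1) / (2 * m + 2) * (Real.pi / 2))) := by
      rw [le_div_iff₀ (by positivity)]; exact h2
    refine h3.trans ?_
    have e : 1 / ((2 * m + 1) * (((2 : ℝ) * m + 1) / (2 * m + 2) * (Real.pi / 2)))
        = (2 / Real.pi) * ((2 * m + 2) / ((2 * m + 1) ^ 2)) := by
      field_simp
    rw [e]
    refine mul_le_mul_of_nonneg_left ?_ (by positivity)
    rw [div_add_div _ _ (by positivity) (by positivity), div_le_div_iff₀ (by positivity) (by positivity)]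
    have : 0 ≤ ((2:ℝ) * m + 1) ^ 2 := by positivity
    nlinarith [mul_nonneg this hm, mul_nonneg (mul_nonneg this hm) hm]
  have e1 : ((2 * m + 1).factorial : ℝ) = (2 * m + 1) * (2 * m).factorial := by
    rw [Nat.factorial_succ]; push_cast; ring
  have e2 : ((2 * m + 2).factorial : ℝ) = (2 * m + 2) * ((2 * m + 1) * (2 * m).factorial) := by
    rw [Nat.factorial_succ, Nat.factorial_succ]; push_cast; ring
  rw [e1, e2, div_le_iff₀ (by positivity)]
  refine hb.trans (le_of_eq ?_)
  have : ((2 * m).factorial : ℝ) ≠ 0 := by positivity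
  field_simp

lemma collision {κ : Type*} [Fintype κ] [DecidableEq κ] (ν : κ → ℝ) (hν : ∀ a, 0 < ν a)
    (h1 : ∑ a, ν a = 1) (r : ℕ) (hr : 1 ≤ r) :
    Kr ν r ^ 2 ≤ (Real.pi / 2) * (2 * r + 1) * Tf ν (2 * r) ^ 2 *
      ∏ a, (1 / (Real.pi * r * ν a) * (1 + 1 / (r * ν a))) := by
  have hr0 : (0:ℝ) < r := by exact_mod_cast hr
  have hpi := Real.pi_pos
  set A := piAntidiag (univ : Finset κ) r with hA
  set X := ∑ μ ∈ A, ((2 * r).factorial : ℝ) * ∏ a, (ν a ^ (2 * μ a) / ((2 * μ a).factorial : ℝ) * Bm (μ a)) with hX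
  have hK : Kr ν r = X / Bm r := by
    rw [eq_div_iff (Bm_pos r).ne', hX, Kr, Finset.sum_mul]
    refine Finset.sum_congr rfl fun μ hμ => ?_
    have hs := (mem_piAntidiag.1 hμ).1
    rw [multinomial_real _ _ hs]
    have e1 : ∏ a, (ν a ^ (2 * μ a) / ((2 * μ a).factorial : ℝ) * Bm (μ a))
        = (∏ a, ν a ^ (2 * μ a)) / (4 ^ r * (∏ a, ((μ a).factorial : ℝ)) ^ 2) := by
      have : ∀ a, ν a ^ (2 * μ a) / ((2 * μ a).factorial : ℝ) * Bm (μ a)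
          = ν a ^ (2 * μ a) / (4 ^ μ a * ((μ a).factorial : ℝ) ^ 2) := by
        intro a
        unfold Bm
        have : ((2 * μ a).factorial : ℝ) ≠ 0 := by positivity
        field_simp
      simp only [this, Finset.prod_div_distrib, Finset.prod_mul_distrib, Finset.prod_pow_eq_pow_sum,
        Finset.prod_pow]
      rw [show ∑ i, μ i = r from hs]
    rw [e1, Bm]
    have : (∏ a, ((μ a).factorial : ℝ)) ≠ 0 := by positivity
    field_simp
  have hsq : X ^ 2 ≤ Tf ν (2 * r) * (Tf ν (2 * r) * ∏ a, (1 / (Real.pi * r * ν a) * (1 + 1 / (r * ν a)))) := by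
    have hcs := Finset.sum_sq_le_sum_mul_sum_of_sq_le_mul A
      (r := fun μ => ((2 * r).factorial : ℝ) * ∏ a, (ν a ^ (2 * μ a) / ((2 * μ a).factorial : ℝ) * Bm (μ a)))
      (f := fun μ => ((2 * r).factorial : ℝ) * ∏ a, (ν a ^ (2 * μ a) / ((2 * μ a).factorial : ℝ)))
      (g := fun μ => ((2 * r).factorial : ℝ) * ∏ a, (ν a ^ (2 * μ a) * (Bm (μ a) ^ 2 / ((2 * μ a).factorial : ℝ))))
      (fun μ _ => mul_nonneg (by positivity) (Finset.prod_nonneg fun a _ => by have := hν a; positivity))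
      (fun μ _ => mul_nonneg (by positivity) (Finset.prod_nonneg fun a _ => by have := hν a; positivity))
      (fun μ _ => le_of_eq <| by
        rw [mul_pow, ← Finset.prod_pow]
        have : ∀ P Q R : ℝ, P * R = Q → ((2 * r).factorial : ℝ) * P * (((2 * r).factorial : ℝ) * R) = ((2 * r).factorial : ℝ) ^ 2 * Q := by
          intro P Q R h; rw [← h]; ring
        symm
        apply this
        rw [← Finset.prod_mul_distrib]
        refine Finset.prod_congr rfl fun a _ => ?_
        ring)
    refine hcs.trans ?_
    have hE : ∑ μ ∈ A, ((2 * r).factorial : ℝ) * ∏ a, (ν a ^ (2 * μ a) / ((2 * μ a).factorial : ℝ)) ≤ Tf ν (2 * r) := by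
      have := shift_sum ν hν h1 r hr (fun _ => 0)
      simp only [add_zero, pow_zero, Finset.prod_const_one, mul_one] at this
      rw [← Finset.mul_sum]
      exact this
    have hG : ∑ μ ∈ A, ((2 * r).factorial : ℝ) * ∏ a, (ν a ^ (2 * μ a) * (Bm (μ a) ^ 2 / ((2 * μ a).factorial : ℝ)))
        ≤ Tf ν (2 * r) * ∏ a, (1 / (Real.pi * r * ν a) * (1 + 1 / (r * ν a))) := by
      have g1 : ∀ μ : κ → ℕ, ∏ a, (ν a ^ (2 * μ a) * (Bm (μ a) ^ 2 / ((2 * μ a).factorial : ℝ)))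
          ≤ (2 / Real.pi) ^ (Fintype.card κ) * ∑ s : κ → Bool, (∏ a, (if s a then (2:ℝ) else 1)) *
            ∏ a, (ν a ^ (2 * μ a) / ((2 * μ a + (if s a then 2 else 1)).factorial : ℝ)) := by
        intro μ
        have g2 : ∏ a, (ν a ^ (2 * μ a) * (Bm (μ a) ^ 2 / ((2 * μ a).factorial : ℝ)))
            ≤ ∏ a, ((2 / Real.pi) * ∑ b : Bool, ((if b then (2:ℝ) else 1) *
              (ν a ^ (2 * μ a) / ((2 * μ a + (if b then 2 else 1)).factorial : ℝ)))) := by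
          refine Finset.prod_le_prod (fun a _ => by have := hν a; positivity) (fun a _ => ?_)
          have := mul_le_mul_of_nonneg_left (Bm_upper (μ a)) (pow_nonneg (hν a).le (2 * μ a))
          refine this.trans (le_of_eq ?_)
          simp only [Fintype.sum_bool, if_true, Bool.false_eq_true, if_false]
          ring
        refine g2.trans (le_of_eq ?_)
        rw [Finset.prod_mul_distrib, Finset.prod_const, Finset.card_univ]
        congr 1
        rw [Finset.prod_univ_sum, Fintype.piFinset_univ]
        refine Finset.sum_congr rfl fun s _ => ?_
        rw [Finset.prod_mul_distrib]
      calc _ ≤ ∑ μ ∈ A, ((2 * r).factorial : ℝ) * ((2 / Real.pi) ^ (Fintype.card κ) * ∑ s : κ → Bool, (∏ a, (if s a then (2:ℝ) else 1)) *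
            ∏ a, (ν a ^ (2 * μ a) / ((2 * μ a + (if s a then 2 else 1)).factorial : ℝ))) :=
            Finset.sum_le_sum fun μ _ => mul_le_mul_of_nonneg_left (g1 μ) (by positivity)
        _ = (2 / Real.pi) ^ (Fintype.card κ) * ∑ s : κ → Bool, (∏ a, (if s a then (2:ℝ) else 1)) *
            (((2 * r).factorial : ℝ) * ∑ μ ∈ A, ∏ a, (ν a ^ (2 * μ a) / ((2 * μ a + (if s a then 2 else 1)).factorial : ℝ))) := by
            simp only [Finset.mul_sum]
            rw [Finset.sum_comm]
            refine Finset.sum_congr rfl fun s _ => Finset.sum_congr rfl fun μ _ => ?_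
            ring
        _ ≤ (2 / Real.pi) ^ (Fintype.card κ) * ∑ s : κ → Bool, (∏ a, (if s a then (2:ℝ) else 1)) *
            (Tf ν (2 * r) * ∏ a, (1 / (2 * r * ν a)) ^ (if s a then 2 else 1)) := by
            refine mul_le_mul_of_nonneg_left (Finset.sum_le_sum fun s _ => ?_) (by positivity)
            refine mul_le_mul_of_nonneg_left (shift_sum ν hν h1 r hr (fun a => if s a then 2 else 1))
              (Finset.prod_nonneg fun a _ => by split_ifs <;> norm_num)
        _ = Tf ν (2 * r) * ((2 / Real.pi) ^ (Fintype.card κ) * ∑ s : κ → Bool, ∏ a, ((if s a then (2:ℝ) else 1) *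
            (1 / (2 * r * ν a)) ^ (if s a then 2 else 1))) := by
            simp only [Finset.mul_sum, Finset.prod_mul_distrib]
            refine Finset.sum_congr rfl fun s _ => ?_
            ring
        _ = Tf ν (2 * r) * ((2 / Real.pi) ^ (Fintype.card κ) * ∏ a, ∑ b : Bool, ((if b then (2:ℝ) else 1) *
            (1 / (2 * r * ν a)) ^ (if b then 2 else 1))) := by
            rw [Finset.prod_univ_sum, Fintype.piFinset_univ]
        _ = _ := by
            congr 1
            rw [← Finset.card_univ, ← Finset.prod_const, ← Finset.prod_mul_distrib]
            refine Finset.prod_congr rfl fun a _ => ?_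
            simp only [Fintype.sum_bool, if_true, Bool.false_eq_true, if_false]
            have := (hν a).ne'
            field_simp
            ring
    refine mul_le_mul hE hG ?_ (Tf_nonneg _ _)
    exact Finset.sum_nonneg fun μ _ => mul_nonneg (by positivity) (Finset.prod_nonneg fun a _ => by have := hν a; positivity)
  rw [hK, div_pow]
  have hB : 1 / Bm r ^ 2 ≤ (2 * r + 1) * (Real.pi / 2) := by
    have h := Bm_sq r
    have hW := Real.Wallis.W_le r
    have := Bm_pos r
    rw [div_le_iff₀ (by positivity), mul_comm]
    refine h.symm.le.trans ?_
    gcongr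
  have hX0 : 0 ≤ X ^ 2 := sq_nonneg _
  calc X ^ 2 / Bm r ^ 2 = X ^ 2 * (1 / Bm r ^ 2) := by ring
    _ ≤ (Tf ν (2 * r) * (Tf ν (2 * r) * ∏ a, (1 / (Real.pi * r * ν a) * (1 + 1 / (r * ν a)))))
        * ((2 * r + 1) * (Real.pi / 2)) := by
        refine mul_le_mul hsq hB (by have := Bm_pos r; positivity) (hX0.trans hsq)
    _ = _ := by ring

/-- sign average bound -/
lemma Tf_bound {κ : Type*} [Fintype κ] [DecidableEq κ] (ν : κ → ℝ) (hν : ∀ a, 0 ≤ ν a)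
    (h1 : ∑ a, ν a = 1) (r : ℕ) :
    Tf ν (2 * r) ≤ (1/2)^(Fintype.card κ) * (2 * ∏ a, (1 + Real.exp (-(4 * r * ν a)))) := by
  unfold Tf
  refine mul_le_mul_of_nonneg_left ?_ (by positivity)
  set Sg := Fintype.piFinset (fun _ : κ => ({1, -1} : Finset ℝ)) with hSg
  have hpt : ∀ e ∈ Sg, |∑ a, e a * ν a| ^ (2 * r) ≤ ∏ a, Real.exp (-(2 * r * (1 - e a) * ν a))
      + ∏ a, Real.exp (-(2 * r * (1 + e a) * ν a)) := by
    intro e _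
    set s := ∑ a, e a * ν a with hs
    rw [← Real.exp_sum, ← Real.exp_sum]
    have e1 : ∑ a, -(2 * r * (1 - e a) * ν a) = -(2 * r * (1 - s)) := by
      have e0 : ∀ a, -(2 * r * (1 - e a) * ν a) = (-(2 * r)) * ν a + (2 * r) * (e a * ν a) := by
        intro a; ring
      simp only [e0, Finset.sum_add_distrib, Finset.sum_sub_distrib, ← Finset.mul_sum, h1]
      rw [← hs]; ring
    have e2 : ∑ a, -(2 * r * (1 + e a) * ν a) = -(2 * r * (1 + s)) := by
      have e0 : ∀ a, -(2 * r * (1 + e a) * ν a) = (-(2 * r)) * ν a - (2 * r) * (e a * ν a) := by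
        intro a; ring
      simp only [e0, Finset.sum_add_distrib, Finset.sum_sub_distrib, ← Finset.mul_sum, h1]
      rw [← hs]; ring
    rw [e1, e2]
    have hb : |s| ^ (2 * r) ≤ Real.exp (-(2 * r * (1 - |s|))) := by
      have : |s| ≤ Real.exp (-(1 - |s|)) := by
        have := Real.add_one_le_exp (-(1 - |s|)); linarith
      refine (pow_le_pow_left₀ (abs_nonneg _) this _).trans (le_of_eq ?_)
      rw [← Real.exp_nat_mul]; congr 1; push_cast; ring
    refine hb.trans ?_
    have p1 := Real.exp_pos (-(2 * r * (1 - s)))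
    have p2 := Real.exp_pos (-(2 * r * (1 + s)))
    rcases abs_cases s with ⟨h, _⟩ | ⟨h, _⟩
    · rw [h]; linarith
    · rw [h, sub_neg_eq_add]; linarith
  refine (Finset.sum_le_sum hpt).trans ?_
  rw [Finset.sum_add_distrib]
  have g1 := Finset.prod_univ_sum (fun _ : κ => ({1, -1} : Finset ℝ)) (fun a x => Real.exp (-(2 * r * (1 - x) * ν a)))
  have g2 := Finset.prod_univ_sum (fun _ : κ => ({1, -1} : Finset ℝ)) (fun a x => Real.exp (-(2 * r * (1 + x) * ν a)))
  rw [hSg, ← g1, ← g2, two_mul (∏ a, _)]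
  refine add_le_add (le_of_eq ?_) (le_of_eq ?_)
  · refine Finset.prod_congr rfl fun a _ => ?_
    rw [Finset.sum_pair (by norm_num)]
    ring_nf
    simp
  · refine Finset.prod_congr rfl fun a _ => ?_
    rw [Finset.sum_pair (by norm_num)]
    ring_nf
    simp [add_comm]

end DSR

namespace DSR

lemma orth {κ : Type*} [Fintype κ] [DecidableEq κ] (M : ℕ) [NeZero M] (c : κ → ZMod M) :
    ∑ θ : κ → ZMod M, (ZMod.stdAddChar (∑ a, θ a * c a) : ℂ)
      = if c = 0 then (M : ℂ) ^ (Fintype.card κ) else 0 := by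
  simp only [char_sum]
  have := Finset.prod_univ_sum (fun _ : κ => (univ : Finset (ZMod M)))
    (fun a x => (ZMod.stdAddChar (x * c a) : ℂ))
  rw [Fintype.piFinset_univ] at this
  rw [← this]
  simp only [sum_char]
  split_ifs with h
  · subst h; simp
  · obtain ⟨a, ha⟩ := Function.ne_iff.1 h
    exact Finset.prod_eq_zero (mem_univ a) (if_neg (by simpa using ha))

lemma char_nsmul (M : ℕ) [NeZero M] (m : ℕ) (x : ZMod M) :
    (ZMod.stdAddChar x : ℂ) ^ m = (ZMod.stdAddChar (x * (m : ZMod M)) : ℂ) := by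
  rw [← AddChar.map_nsmul_eq_pow, nsmul_eq_mul, mul_comm]

lemma moment {κ : Type*} [Fintype κ] [DecidableEq κ] (M : ℕ) [NeZero M] (ν : κ → ℝ) (z : κ → ℂ)
    (hz : ∀ a, ‖z a‖ = ν a) (r : ℕ) (hr : r < M) :
    ∑ θ : κ → ZMod M, ‖∑ a, z a * (ZMod.stdAddChar (θ a) : ℂ)‖ ^ (2 * r)
      = (M : ℝ) ^ (Fintype.card κ) * Kr ν r := by
  set A := piAntidiag (univ : Finset κ) r with hA
  set c : (κ → ℕ) → ℂ := fun μ => (Nat.multinomial univ μ : ℂ) * ∏ a, z a ^ μ a with hc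
  have hle : ∀ μ ∈ A, ∀ a, μ a < M := by
    intro μ hμ a
    have hs : ∑ a, μ a = r := (mem_piAntidiag.1 hμ).1
    have : μ a ≤ ∑ a, μ a := Finset.single_le_sum (fun _ _ => Nat.zero_le _) (mem_univ a)
    omega
  have h1 : ∀ θ : κ → ZMod M, (∑ a, z a * (ZMod.stdAddChar (θ a) : ℂ)) ^ r
      = ∑ μ ∈ A, c μ * (ZMod.stdAddChar (∑ a, θ a * (μ a : ZMod M)) : ℂ) := by
    intro θ
    rw [Finset.sum_pow_eq_sum_piAntidiag]
    refine Finset.sum_congr rfl fun μ _ => ?_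
    rw [char_sum, hc]
    simp only [mul_pow, Finset.prod_mul_distrib, char_nsmul]
    ring
  have h2 : ∀ θ : κ → ZMod M, ((‖∑ a, z a * (ZMod.stdAddChar (θ a) : ℂ)‖ ^ (2 * r) : ℝ) : ℂ)
      = ∑ μ ∈ A, ∑ μ' ∈ A, (c μ * (starRingEnd ℂ) (c μ')) *
        (ZMod.stdAddChar (∑ a, θ a * ((μ a : ZMod M) - (μ' a : ZMod M))) : ℂ) := by
    intro θ
    have e1 : ((‖∑ a, z a * (ZMod.stdAddChar (θ a) : ℂ)‖ ^ (2 * r) : ℝ) : ℂ)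
        = ((∑ a, z a * (ZMod.stdAddChar (θ a) : ℂ)) ^ r) *
          (starRingEnd ℂ) ((∑ a, z a * (ZMod.stdAddChar (θ a) : ℂ)) ^ r) := by
      rw [Complex.mul_conj, Complex.normSq_eq_norm_sq, norm_pow, ← pow_mul, mul_comm r 2]
    rw [e1, h1, map_sum, Finset.sum_mul_sum]
    refine Finset.sum_congr rfl fun μ _ => Finset.sum_congr rfl fun μ' _ => ?_
    simp only [map_mul, conj_char]
    have e2 : ∑ a, θ a * ((μ a : ZMod M) - (μ' a : ZMod M)) = ∑ a, θ a * (μ a : ZMod M) + -∑ a, θ a * (μ' a : ZMod M) := by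
      simp only [mul_sub, Finset.sum_sub_distrib]; ring
    rw [e2, AddChar.map_add_eq_mul]
    ring
  have h3 : ((∑ θ : κ → ZMod M, ‖∑ a, z a * (ZMod.stdAddChar (θ a) : ℂ)‖ ^ (2 * r) : ℝ) : ℂ)
      = (((M : ℝ) ^ (Fintype.card κ) * Kr ν r : ℝ) : ℂ) := by
    rw [Complex.ofReal_sum]
    simp only [h2]
    rw [Finset.sum_comm]
    rw [Kr, Finset.mul_sum, Complex.ofReal_sum]
    refine Finset.sum_congr rfl fun μ hμ => ?_
    rw [Finset.sum_comm, Finset.sum_eq_single_of_mem μ hμ]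
    · rw [← Finset.mul_sum, orth M (fun a => (μ a : ZMod M) - (μ a : ZMod M)), if_pos (by funext a; simp),
        Complex.mul_conj, Complex.normSq_eq_norm_sq]
      have : ‖c μ‖ ^ 2 = (Nat.multinomial univ μ : ℝ) ^ 2 * ∏ a, ν a ^ (2 * μ a) := by
        simp only [hc, norm_mul, norm_prod, norm_pow, hz, Complex.norm_natCast, mul_pow]
        congr 1
        rw [← Finset.prod_pow]
        refine Finset.prod_congr rfl fun a _ => ?_
        rw [← pow_mul, mul_comm 2]
      rw [this]
      push_cast
      ring
    · intro μ' hμ' hne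
      rw [← Finset.mul_sum, orth M (fun a => (μ a : ZMod M) - (μ' a : ZMod M)), if_neg, mul_zero]
      intro h0
      apply hne
      funext a
      have h4 : (μ a : ZMod M) = (μ' a : ZMod M) := sub_eq_zero.1 (congrFun h0 a)
      have h5 := congrArg ZMod.val h4
      rw [ZMod.val_cast_of_lt (hle μ hμ a), ZMod.val_cast_of_lt (hle μ' hμ' a)] at h5
      exact h5.symm
  exact_mod_cast h3

lemma Wc_fourier (n d p : ℕ) [NeZero p] (t : ZMod p → ℕ) (ht : ∑ a, t a = n) (ν : ZMod p → ℝ)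
    (M : ℕ) [NeZero M] (hM : n * d < M) :
    (M : ℝ) ^ p * ((p : ℝ) ^ n * (Wc n d p t * ∏ a, ν a ^ (d * t a)))
      ≤ ∑ θ : ZMod p → ZMod M,
        (∑ k, ‖hat (fun a => (ν a : ℂ) * (ZMod.stdAddChar (θ a) : ℂ)) k‖ ^ d) ^ n := by
  have hp0 : (0:ℝ) < p := by exact_mod_cast Nat.pos_of_ne_zero (NeZero.ne p)
  set z : (ZMod p → ZMod M) → ZMod p → ℂ := fun θ a => (ν a : ℂ) * (ZMod.stdAddChar (θ a) : ℂ) with hz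
  set G : (ZMod p → ZMod M) → ℂ := fun θ =>
    ∑ u ∈ univ.filter (fun u : Fin d → ZMod p => ∑ i, u i = 0), ∏ i, z θ (u i) with hG
  have hGb : ∀ θ, p * ‖G θ‖ ≤ ∑ k, ‖hat (z θ) k‖ ^ d := by
    intro θ
    have h := zero_sum_fourier (fun _ : Fin d => z θ)
    have h2 : ‖(p:ℂ) * G θ‖ = p * ‖G θ‖ := by rw [norm_mul, Complex.norm_natCast]
    rw [← h2, hG]
    simp only
    rw [h]
    refine (norm_sum_le _ _).trans (le_of_eq ?_)
    simp
  set R := univ.filter (fun w : Fin n × Fin d → ZMod p => ∀ k, ∑ i, w (k, i) = 0) with hR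
  have hGn : ∀ θ, G θ ^ n = ∑ w ∈ R, ∏ x, z θ (w x) := by
    intro θ
    rw [hR, sum_rows n d (fun u => ∑ i, u i = 0) (z θ)]
  have key : ((M:ℂ) ^ p * (Wc n d p t * ∏ a, (ν a : ℂ) ^ (d * t a)))
      = ∑ θ : ZMod p → ZMod M, (ZMod.stdAddChar (-∑ a, θ a * ((d * t a : ℕ) : ZMod M)) : ℂ) * G θ ^ n := by
    simp only [hGn, Finset.mul_sum]
    rw [Finset.sum_comm]
    have h3 : ∀ w : Fin n × Fin d → ZMod p, ∑ θ : ZMod p → ZMod M,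
        (ZMod.stdAddChar (-∑ a, θ a * ((d * t a : ℕ) : ZMod M)) : ℂ) * ∏ x, z θ (w x)
        = if (∀ a, (univ.filter (fun y => w y = a)).card = d * t a) then
          (M:ℂ) ^ p * ∏ a, (ν a : ℂ) ^ (d * t a) else 0 := by
      intro w
      have h4 : ∀ θ : ZMod p → ZMod M, (ZMod.stdAddChar (-∑ a, θ a * ((d * t a : ℕ) : ZMod M)) : ℂ) * ∏ x, z θ (w x)
          = (∏ a, (ν a : ℂ) ^ (univ.filter (fun y => w y = a)).card) *
            (ZMod.stdAddChar (∑ a, θ a * (((univ.filter (fun y => w y = a)).card : ZMod M) - ((d * t a : ℕ) : ZMod M))) : ℂ) := by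
        intro θ
        rw [prod_type]
        simp only [hz, mul_pow, Finset.prod_mul_distrib, char_nsmul]
        rw [← char_sum]
        have e2 : ∑ a, θ a * (((univ.filter (fun y => w y = a)).card : ZMod M) - ((d * t a : ℕ) : ZMod M))
            = -∑ a, θ a * ((d * t a : ℕ) : ZMod M) + ∑ a, θ a * ((univ.filter (fun y => w y = a)).card : ZMod M) := by
          simp only [mul_sub, Finset.sum_sub_distrib]; ring
        rw [e2, AddChar.map_add_eq_mul]
        ring
      simp only [h4]
      rw [← Finset.mul_sum, orth, ZMod.card]
      by_cases hw : ∀ a, (univ.filter (fun y => w y = a)).card = d * t a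
      · rw [if_pos hw, if_pos (by funext a; rw [hw a]; simp)]
        simp only [hw]
        ring
      · rw [if_neg hw, if_neg, mul_zero]
        intro h0
        apply hw
        intro a
        have h5 : ((univ.filter (fun y => w y = a)).card : ZMod M) = ((d * t a : ℕ) : ZMod M) :=
          sub_eq_zero.1 (congrFun h0 a)
        have h6 := congrArg ZMod.val h5
        have b1 : (univ.filter (fun y => w y = a)).card < M := by
          refine lt_of_le_of_lt (Finset.card_le_univ _) ?_
          simpa using hM
        have b2 : d * t a < M := by
          have : t a ≤ n := ht ▸ Finset.single_le_sum (fun _ _ => Nat.zero_le _) (mem_univ a)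
          have := Nat.mul_le_mul_left d this
          rw [mul_comm n d] at hM
          omega
        rwa [ZMod.val_cast_of_lt b1, ZMod.val_cast_of_lt b2] at h6
    rw [Finset.sum_congr rfl (fun w _ => h3 w), ← Finset.sum_filter, hR, Finset.filter_filter,
      Finset.sum_const, nsmul_eq_mul]
    simp only [Wc]
    ring
  have hWn : (M : ℝ) ^ p * (Wc n d p t * ∏ a, ν a ^ (d * t a)) ≤ ∑ θ : ZMod p → ZMod M, ‖G θ‖ ^ n := by
    have e : ((M:ℂ) ^ p * (Wc n d p t * ∏ a, (ν a : ℂ) ^ (d * t a)))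
        = (((M : ℝ) ^ p * (Wc n d p t * ∏ a, ν a ^ (d * t a)) : ℝ) : ℂ) := by push_cast; rfl
    rw [e] at key
    refine (le_abs_self _).trans ?_
    rw [← Real.norm_eq_abs, ← Complex.norm_real, key]
    refine (norm_sum_le _ _).trans (le_of_eq ?_)
    refine Finset.sum_congr rfl fun θ _ => ?_
    rw [norm_mul, norm_char, one_mul, norm_pow]
  calc _ = (p:ℝ) ^ n * ((M : ℝ) ^ p * (Wc n d p t * ∏ a, ν a ^ (d * t a))) := by ring
    _ ≤ (p:ℝ) ^ n * ∑ θ : ZMod p → ZMod M, ‖G θ‖ ^ n := mul_le_mul_of_nonneg_left hWn (by positivity)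
    _ = ∑ θ : ZMod p → ZMod M, (p * ‖G θ‖) ^ n := by
        rw [Finset.mul_sum]; simp only [mul_pow]
    _ ≤ _ := Finset.sum_le_sum fun θ _ => pow_le_pow_left₀ (by positivity) (hGb θ) n

set_option maxHeartbeats 1000000 in
lemma pointwise {κ : Type*} [Fintype κ] [DecidableEq κ] (n d p r m : ℕ) (hd : 3 ≤ d) (hdp : d ≤ p)
    (hm : n ≤ p * m) (hr : 2 * r + 2 * m ≤ n * d)
    (x : κ → ℝ) (hx0 : ∀ k, 0 ≤ x k) (hx1 : ∀ k, x k ≤ 1) (η : ℝ) (hη0 : 0 ≤ η)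
    (hsum : ∑ k, x k ^ 2 = 1 + η) (hη1 : 144 * (p:ℝ)^2 * η ≤ 1) (hη2 : 6 * n * (η * √η) ≤ 1) :
    (∑ k, x k ^ d) ^ n ≤ Real.exp 1 * ∑ k, x k ^ (2 * r) + Real.exp (-(n / (144 * (p:ℝ)^2))) := by
  have hp3 : (3:ℝ) ≤ p := by exact_mod_cast hd.trans hdp
  have hp0 : (0:ℝ) < p := by linarith
  have hd3 : (3:ℝ) ≤ d := by exact_mod_cast hd
  have hdpR : (d:ℝ) ≤ p := by exact_mod_cast hdp
  have hsumd0 : 0 ≤ ∑ k, x k ^ d := Finset.sum_nonneg fun k _ => pow_nonneg (hx0 k) _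
  by_cases hex : ∃ k, 1 - 1 / (36 * (p:ℝ)^2) ≤ x k ^ 2
  · obtain ⟨k, hk⟩ := hex
    set s := 1 - x k ^ 2 with hs
    have hs0 : 0 ≤ s := by rw [hs]; nlinarith [hx0 k, hx1 k]
    have hs1 : s ≤ 1 / (36 * (p:ℝ)^2) := by rw [hs]; linarith
    have hsmall : s ≤ (1/(6*(p:ℝ)))^2 := by
      refine hs1.trans (le_of_eq ?_); field_simp; norm_num
    have hsq : √s ≤ 1 / (6 * p) := by
      rw [Real.sqrt_le_left (by positivity)]; exact hsmall
    have hrest : ∑ j ∈ univ.erase k, x j ^ 2 = s + η := by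
      have := Finset.add_sum_erase univ (fun j => x j ^ 2) (mem_univ k)
      rw [hsum] at this
      rw [hs]; linarith
    have hτ : ∑ j ∈ univ.erase k, x j ^ d ≤ (s + η) * √(s + η) := by
      have : ∀ j ∈ univ.erase k, x j ^ d ≤ x j ^ 2 * √(s + η) := by
        intro j hj
        have h1 : x j ^ d ≤ x j ^ 3 := pow_le_pow_of_le_one (hx0 j) (hx1 j) hd
        have h2 : x j ≤ √(s + η) := by
          apply Real.le_sqrt_of_sq_le
          rw [← hrest]
          exact Finset.single_le_sum (f := fun j => x j ^ 2) (fun i _ => sq_nonneg _) hj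
        have : x j ^ 3 = x j ^ 2 * x j := by ring
        rw [this] at h1
        exact h1.trans (mul_le_mul_of_nonneg_left h2 (sq_nonneg _))
      refine (Finset.sum_le_sum this).trans (le_of_eq ?_)
      rw [← Finset.sum_mul, hrest]
    have hτ2 : (s + η) * √(s + η) ≤ 3 * (s * √s + η * √η) := by
      have h15 : √2 ≤ 3/2 := by rw [Real.sqrt_le_left (by norm_num)]; norm_num
      rcases le_total s η with h | h
      · have e1 : √(s + η) ≤ √(2 * η) := Real.sqrt_le_sqrt (by linarith)
        have e2 : √(2 * η) = √2 * √η := Real.sqrt_mul (by norm_num) _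
        have e3 : 0 ≤ s * √s := by positivity
        calc (s + η) * √(s + η) ≤ (2 * η) * ((3/2) * √η) := by
              refine mul_le_mul (by linarith) (e1.trans ?_) (by positivity) (by positivity)
              rw [e2]; gcongr
          _ ≤ _ := by linarith
      · have e1 : √(s + η) ≤ √(2 * s) := Real.sqrt_le_sqrt (by linarith)
        have e2 : √(2 * s) = √2 * √s := Real.sqrt_mul (by norm_num) _
        have e3 : 0 ≤ η * √η := by positivity
        calc (s + η) * √(s + η) ≤ (2 * s) * ((3/2) * √s) := by
              refine mul_le_mul (by linarith) (e1.trans ?_) (by positivity) (by positivity)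
              rw [e2]; gcongr
          _ ≤ _ := by linarith
    have hτ3 : (s + η) * √(s + η) ≤ s / (2 * p) + 3 * (η * √η) := by
      refine hτ2.trans ?_
      have : s * √s ≤ s * (1 / (6 * p)) := mul_le_mul_of_nonneg_left hsq hs0
      have e : 3 * (s * (1 / (6 * p))) = s / (2 * p) := by field_simp; ring
      linarith
    have hx2 : x k ^ 2 = 1 - s := by rw [hs]; ring
    have hs36 : s ≤ 1/36 := by
      refine hs1.trans ?_
      apply one_div_le_one_div_of_le (by norm_num)
      nlinarith
    have hsd : s * d ≤ 1/36 := by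
      have : s * d ≤ 1 / (36 * (p:ℝ)^2) * p := mul_le_mul hs1 hdpR (by positivity) (by positivity)
      refine this.trans ?_
      have e : 1 / (36 * (p:ℝ)^2) * p = 1 / (36 * p) := by field_simp
      rw [e]
      apply one_div_le_one_div_of_le (by norm_num)
      nlinarith
    have hxpos : 0 < x k := by
      rcases (hx0 k).lt_or_eq with h | h
      · exact h
      · rw [← h] at hx2; norm_num at hx2; linarith
    have hxd : 1/2 ≤ x k ^ d := by
      have h1 : (1 - s) ≤ x k := by nlinarith [hx1 k, hx0 k]
      have h2 : 1 + (d:ℝ) * (-s) ≤ (1 + (-s)) ^ d := one_add_mul_le_pow (by linarith) d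
      have h3 : (1 + (-s)) ^ d ≤ x k ^ d := pow_le_pow_left₀ (by linarith) (by linarith) d
      nlinarith
    have hmain : ∑ j, x j ^ d ≤ x k ^ d * Real.exp (s / p + 6 * (η * √η)) := by
      rw [← Finset.add_sum_erase univ (fun j => x j ^ d) (mem_univ k)]
      set τ := (s + η) * √(s + η) with hτd
      have hτ0 : 0 ≤ τ := by positivity
      have e1 : x k ^ d + τ ≤ x k ^ d * (1 + 2 * τ) := by nlinarith
      have e2 : 1 + 2 * τ ≤ Real.exp (s / p + 6 * (η * √η)) := by
        have := Real.add_one_le_exp (2 * τ)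
        have h2 : 2 * τ ≤ s / p + 6 * (η * √η) := by
          have : 2 * (s / (2 * p)) = s / p := by field_simp
          linarith
        have h3 := Real.exp_le_exp.2 h2
        linarith
      have e3 := mul_le_mul_of_nonneg_left e2 (pow_nonneg (hx0 k) d)
      linarith
    have hfin : (∑ j, x j ^ d) ^ n ≤ Real.exp 1 * x k ^ (2 * r) := by
      refine (pow_le_pow_left₀ hsumd0 hmain n).trans ?_
      rw [mul_pow, ← Real.exp_nat_mul, ← pow_mul]
      have e1 : (n:ℝ) * (s / p + 6 * (η * √η)) ≤ s * m + 1 := by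
        have h1 : (n:ℝ) * (s / p) ≤ s * m := by
          have : (n:ℝ) ≤ p * m := by exact_mod_cast hm
          have h2 := mul_le_mul_of_nonneg_left this hs0
          rw [mul_div_assoc', div_le_iff₀ hp0]
          linarith
        have h3 : (n:ℝ) * (s / p + 6 * (η * √η)) = n * (s / p) + 6 * n * (η * √η) := by ring
        linarith
      have e2 : Real.exp (s * m) * x k ^ (2 * m) ≤ 1 := by
        rw [pow_mul, hx2]
        have h1 : 1 - s ≤ Real.exp (-s) := by have := Real.add_one_le_exp (-s); linarith
        have h2 : (1 - s) ^ m ≤ Real.exp (-s) ^ m := pow_le_pow_left₀ (by linarith) h1 m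
        rw [← Real.exp_nat_mul] at h2
        calc Real.exp (s * m) * (1 - s) ^ m ≤ Real.exp (s * m) * Real.exp (m * -s) := by gcongr
          _ = 1 := by rw [← Real.exp_add]; ring_nf; simp
      have e3 : x k ^ (d * n) ≤ x k ^ (2 * r) * x k ^ (2 * m) := by
        rw [← pow_add]
        exact pow_le_pow_of_le_one (hx0 k) (hx1 k) (by rw [mul_comm d n]; exact hr)
      calc x k ^ (d * n) * Real.exp (n * (s / p + 6 * (η * √η)))
          ≤ (x k ^ (2 * r) * x k ^ (2 * m)) * (Real.exp (s * m) * Real.exp 1) := by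
            rw [← Real.exp_add]
            exact mul_le_mul e3 (Real.exp_le_exp.2 e1) (Real.exp_pos _).le (by positivity)
        _ = (Real.exp 1 * x k ^ (2 * r)) * (Real.exp (s * m) * x k ^ (2 * m)) := by ring
        _ ≤ (Real.exp 1 * x k ^ (2 * r)) * 1 := by gcongr
        _ = _ := mul_one _
    have hle : x k ^ (2 * r) ≤ ∑ j, x j ^ (2 * r) :=
      Finset.single_le_sum (f := fun j => x j ^ (2 * r)) (fun j _ => pow_nonneg (hx0 j) _) (mem_univ k)
    have := mul_le_mul_of_nonneg_left hle (Real.exp_pos 1).le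
    have := Real.exp_pos (-(n / (144 * (p:ℝ)^2)))
    linarith
  · push Not at hex
    set s0 := 1 / (36 * (p:ℝ)^2) with hs0
    have hs0p : 0 < s0 := by positivity
    have hs01 : s0 ≤ 1 := by
      rw [hs0, div_le_one (by positivity)]; nlinarith
    have h1 : ∀ k, x k ^ d ≤ x k ^ 2 * (1 - s0 / 2) := by
      intro k
      have h1 : x k ^ d ≤ x k ^ 3 := pow_le_pow_of_le_one (hx0 k) (hx1 k) hd
      have h2 : x k ≤ 1 - s0 / 2 := by
        have := hex k
        refine abs_le_of_sq_le_sq' ?_ (by linarith) |>.2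
        nlinarith
      have h3 := mul_le_mul_of_nonneg_left h2 (sq_nonneg (x k))
      have : x k ^ 3 = x k ^ 2 * x k := by ring
      linarith
    have h2 : ∑ k, x k ^ d ≤ Real.exp (-(1 / (144 * (p:ℝ)^2))) := by
      have h3 := Finset.sum_le_sum fun k (_ : k ∈ (univ : Finset κ)) => h1 k
      rw [← Finset.sum_mul, hsum] at h3
      have e : 1 / (144 * (p:ℝ)^2) = s0 / 4 := by rw [hs0]; field_simp; norm_num
      have hη3 : η ≤ s0 / 4 := by
        rw [← e, le_div_iff₀ (by positivity)]; linarith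
      rw [e]
      have := Real.add_one_le_exp (-(s0 / 4))
      nlinarith
    have h4 := pow_le_pow_left₀ hsumd0 h2 n
    rw [← Real.exp_nat_mul] at h4
    have e : (n:ℝ) * -(1 / (144 * (p:ℝ)^2)) = -(n / (144 * (p:ℝ)^2)) := by ring
    rw [e] at h4
    have : 0 ≤ Real.exp 1 * ∑ k, x k ^ (2 * r) :=
      mul_nonneg (Real.exp_pos _).le (Finset.sum_nonneg fun k _ => pow_nonneg (hx0 k) _)
    linarith

lemma bulk_W (n d p r m : ℕ) [NeZero p] (hd : 3 ≤ d) (hdp : d ≤ p)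
    (hm : n ≤ p * m) (hr : 2 * r + 2 * m ≤ n * d) (t : ZMod p → ℕ) (ht : ∑ a, t a = n)
    (ν : ZMod p → ℝ) (hν : ∀ a, 0 ≤ ν a) (h1 : ∑ a, ν a = 1)
    (η : ℝ) (hη : η = p * ∑ a, ν a ^ 2 - 1) (hη1 : 144 * (p:ℝ)^2 * η ≤ 1)
    (hη2 : 6 * n * (η * √η) ≤ 1) :
    (p : ℝ) ^ n * (Wc n d p t * ∏ a, ν a ^ (d * t a))
      ≤ Real.exp 1 * (p * Kr ν r) + Real.exp (-(n / (144 * (p:ℝ)^2))) := by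
  set M := n * d + 1 with hM
  have hM0 : NeZero M := ⟨by omega⟩
  have hMp : (0:ℝ) < M := by positivity
  have h := Wc_fourier n d p t ht ν M (by omega)
  have hη0 : 0 ≤ η := by
    have := sq_sum_le_card_mul_sum_sq (s := (univ : Finset (ZMod p))) (f := ν)
    rw [h1, card_univ, ZMod.card] at this
    rw [hη]; linarith
  have hnorm : ∀ (θ : ZMod p → ZMod M) (a : ZMod p),
      ‖(ν a : ℂ) * (ZMod.stdAddChar (θ a) : ℂ)‖ = ν a := by
    intro θ a
    rw [norm_mul, norm_char, mul_one, Complex.norm_real, Real.norm_of_nonneg (hν a)]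
  have hpt : ∀ θ : ZMod p → ZMod M,
      (∑ k, ‖hat (fun a => (ν a : ℂ) * (ZMod.stdAddChar (θ a) : ℂ)) k‖ ^ d) ^ n
      ≤ Real.exp 1 * ∑ k, ‖hat (fun a => (ν a : ℂ) * (ZMod.stdAddChar (θ a) : ℂ)) k‖ ^ (2 * r)
        + Real.exp (-(n / (144 * (p:ℝ)^2))) := by
    intro θ
    refine pointwise n d p r m hd hdp hm hr _ (fun k => norm_nonneg _) (fun k => ?_) η hη0 ?_ hη1 hη2
    · refine (norm_hat_le _ _).trans (le_of_eq ?_)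
      simp only [hnorm, h1]
    · rw [plancherel, hη]
      simp only [hnorm]
      ring
  have h2 := h.trans (Finset.sum_le_sum fun θ _ => hpt θ)
  rw [Finset.sum_add_distrib, ← Finset.mul_sum, Finset.sum_comm] at h2
  have h3 : ∀ k : ZMod p, ∑ θ : ZMod p → ZMod M,
      ‖hat (fun a => (ν a : ℂ) * (ZMod.stdAddChar (θ a) : ℂ)) k‖ ^ (2 * r) = (M:ℝ) ^ p * Kr ν r := by
    intro k
    have := moment M ν (fun a => (ν a : ℂ) * (ZMod.stdAddChar (k * a) : ℂ)) (fun a => by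
      rw [norm_mul, norm_char, mul_one, Complex.norm_real, Real.norm_of_nonneg (hν a)]) r (by omega)
    rw [ZMod.card] at this
    rw [← this]
    refine Finset.sum_congr rfl fun θ _ => ?_
    congr 2
    simp only [hat]
    refine Finset.sum_congr rfl fun a _ => ?_
    ring
  simp only [h3] at h2
  simp only [sum_const, card_univ, ZMod.card, nsmul_eq_mul, Fintype.card_pi, prod_const] at h2
  push_cast at h2
  have h5 : (M:ℝ) ^ p * ((p : ℝ) ^ n * (Wc n d p t * ∏ a, ν a ^ (d * t a)))
      ≤ (M:ℝ) ^ p * (Real.exp 1 * (p * Kr ν r) + Real.exp (-(n / (144 * (p:ℝ)^2)))) := by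
    refine h2.trans (le_of_eq ?_); ring
  exact le_of_mul_le_mul_left h5 (by positivity)

end DSR

namespace DSR

lemma phi_bound (N r : ℕ) (p x : ℝ) (hp : 0 < p) (hr : 1 ≤ r) (hrN : 2 * r + 1 ≤ N) (hx : 1/2 ≤ p * x) :
    (2 * Real.pi * (N * x) * Real.exp (1 / (6 * (N * x)))) *
      ((1/4) * (1 + Real.exp (-(4 * r * x))) ^ 2 * (1 / (Real.pi * r * x) * (1 + 1 / (r * x))))
      ≤ Real.exp (((N:ℝ) - 2 * r) / (2 * r) + 4 * p / r) := by
  have hpi := Real.pi_pos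
  have hr0 : (0:ℝ) < r := by exact_mod_cast hr
  have hx0 : 0 < x := by
    by_contra h
    push Not at h
    nlinarith [mul_nonneg hp.le (neg_nonneg.2 h)]
  have hN0 : (0:ℝ) < N := by exact_mod_cast (by omega : 0 < N)
  have hNr : (2 * r:ℝ) ≤ N := by exact_mod_cast (by omega : 2 * r ≤ N)
  set y := 1 / (r * x) with hy
  have hy0 : 0 < y := by positivity
  have hyp : y ≤ 2 * p / r := by
    rw [hy, div_le_div_iff₀ (by positivity) hr0]
    nlinarith
  have a1 : (N:ℝ) / (2 * r) ≤ Real.exp (((N:ℝ) - 2 * r) / (2 * r)) := by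
    have := Real.add_one_le_exp (((N:ℝ) - 2 * r) / (2 * r))
    have e : ((N:ℝ) - 2 * r) / (2 * r) + 1 = N / (2 * r) := by field_simp; ring
    linarith
  have a2 : 1 + Real.exp (-(4 * r * x)) ≤ Real.exp (y / 4) := by
    have h1 : Real.exp (-(4 * r * x)) ≤ y / 4 := by
      rw [Real.exp_neg]
      have := Real.add_one_le_exp (4 * r * x)
      have e : y / 4 = (4 * r * x)⁻¹ := by rw [hy]; field_simp
      rw [e]
      apply inv_anti₀ (by positivity)
      linarith
    have := Real.add_one_le_exp (y / 4)
    linarith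
  have a3 : 1 + y ≤ Real.exp y := by have := Real.add_one_le_exp y; linarith
  have a4 : Real.exp (1 / (6 * (N * x))) ≤ Real.exp (y / 2) := by
    apply Real.exp_le_exp.2
    have e : y / 2 = 1 / (2 * r * x) := by rw [hy]; field_simp
    rw [e]
    apply one_div_le_one_div_of_le (by positivity)
    nlinarith
  have e0 : (2 * Real.pi * (N * x) * Real.exp (1 / (6 * (N * x)))) *
      ((1/4) * (1 + Real.exp (-(4 * r * x))) ^ 2 * (1 / (Real.pi * r * x) * (1 + y)))
      = (N / (2 * r)) * (1 + Real.exp (-(4 * r * x))) ^ 2 * (1 + y) * Real.exp (1 / (6 * (N * x))) := by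
    field_simp; ring
  rw [e0]
  calc (N / (2 * r)) * (1 + Real.exp (-(4 * r * x))) ^ 2 * (1 + y) * Real.exp (1 / (6 * (N * x)))
      ≤ Real.exp (((N:ℝ) - 2 * r) / (2 * r)) * Real.exp (y / 4) ^ 2 * Real.exp y * Real.exp (y / 2) := by
        gcongr
    _ = Real.exp (((N:ℝ) - 2 * r) / (2 * r) + 2 * y) := by
        rw [← Real.exp_nat_mul, ← Real.exp_add, ← Real.exp_add, ← Real.exp_add]
        congr 1; push_cast; ring
    _ ≤ _ := by
        apply Real.exp_le_exp.2
        have : 4 * p / r = 2 * (2 * p / r) := by ring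
        linarith

lemma stir_ratio (n d p r : ℕ) [NeZero p] (t : ZMod p → ℕ) (ht : ∑ a, t a = n) (hn : 1 ≤ n)
    (hd : 1 ≤ d) (hr : 1 ≤ r) (hrN : 2 * r + 1 ≤ n * d) (hν : ∀ a, 1/2 ≤ (p:ℝ) * nu n t a)
    (h1 : (p:ℝ) * ((n * d : ℕ) - 2 * r) ≤ 4 * r) (h2 : 4 * (p:ℝ)^2 ≤ r) :
    (∏ a, ((d * t a).factorial : ℝ)) * Kr (nu n t) r
      ≤ Real.exp 2 * ((n * d).factorial * ∏ a, nu n t a ^ (d * t a)) := by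
  have hpi := Real.pi_pos
  have hp0 : (0:ℝ) < p := by exact_mod_cast Nat.pos_of_ne_zero (NeZero.ne p)
  have hr0 : (0:ℝ) < r := by exact_mod_cast hr
  have hn0 : (0:ℝ) < n := by exact_mod_cast hn
  have hd0 : (0:ℝ) < d := by exact_mod_cast hd
  have hν0 : ∀ a, 0 < nu n t a := by
    intro a
    rcases (nu_nonneg n t a).lt_or_eq with h | h
    · exact h
    · have := hν a; rw [← h] at this; norm_num at this
  have hsum := sum_nu n t hn ht
  set N := n * d with hN
  have hN0 : (0:ℝ) < N := by exact_mod_cast (by omega : 0 < N)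
  have hdt : ∀ a, ((d * t a : ℕ) : ℝ) = N * nu n t a := by
    intro a; rw [hN, nu]; push_cast; field_simp
  set ν := nu n t with hνd
  set E := ((N:ℝ) / Real.exp 1) ^ N * ∏ a, ν a ^ (d * t a) with hE
  have hE0 : 0 ≤ E := mul_nonneg (by positivity) (Finset.prod_nonneg fun a _ => pow_nonneg (hν0 a).le _)
  have hA : (∏ a, ((d * t a).factorial : ℝ)) ^ 2
      ≤ (∏ a, (2 * Real.pi * (N * ν a) * Real.exp (1 / (6 * (N * ν a))))) * E ^ 2 := by
    have hEp : E = ∏ a, (N * ν a / Real.exp 1) ^ (d * t a) := by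
      rw [hE]
      have : ∀ a, (N * ν a / Real.exp 1) ^ (d * t a) = ((N:ℝ) / Real.exp 1) ^ (d * t a) * ν a ^ (d * t a) := by
        intro a; rw [← mul_pow]; congr 1; ring
      simp only [this]
      rw [Finset.prod_mul_distrib, Finset.prod_pow_eq_pow_sum, ← Finset.mul_sum, ht, mul_comm d n]
    rw [hEp, ← Finset.prod_pow, ← Finset.prod_pow, ← Finset.prod_mul_distrib]
    refine Finset.prod_le_prod (fun a _ => by positivity) fun a _ => ?_
    have hpos : 1 ≤ d * t a := by
      have : (0:ℝ) < ((d * t a : ℕ) : ℝ) := by rw [hdt]; exact mul_pos hN0 (hν0 a)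
      exact_mod_cast this
    have h := fact_upper (d * t a) hpos
    rw [hdt] at h
    have hNν : 0 < N * ν a := mul_pos hN0 (hν0 a)
    refine (pow_le_pow_left₀ (by positivity) h 2).trans (le_of_eq ?_)
    rw [mul_pow, mul_pow, Real.sq_sqrt (by positivity), ← Real.exp_nat_mul]
    have : ((2:ℕ):ℝ) * (1 / (12 * (N * ν a))) = 1 / (6 * (N * ν a)) := by push_cast; field_simp; norm_num
    rw [this]; ring
  have hK : Kr ν r ^ 2 ≤ 2 * Real.pi * (2 * r + 1) *
      ∏ a, ((1/4) * (1 + Real.exp (-(4 * r * ν a))) ^ 2 * (1 / (Real.pi * r * ν a) * (1 + 1 / (r * ν a)))) := by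
    refine (collision ν hν0 hsum r hr).trans ?_
    have hT := Tf_bound ν (fun a => (hν0 a).le) hsum r
    have hT2 := pow_le_pow_left₀ (Tf_nonneg ν (2 * r)) hT 2
    have hprod : 0 ≤ ∏ a, (1 / (Real.pi * r * ν a) * (1 + 1 / (r * ν a))) :=
      Finset.prod_nonneg fun a _ => by have := hν0 a; positivity
    calc _ ≤ (Real.pi / 2) * (2 * r + 1) * ((1/2)^(Fintype.card (ZMod p)) * (2 * ∏ a, (1 + Real.exp (-(4 * r * ν a))))) ^ 2 *
      ∏ a, (1 / (Real.pi * r * ν a) * (1 + 1 / (r * ν a))) := by gcongr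
      _ = _ := by
        rw [Finset.prod_mul_distrib (f := fun a => (1/4) * (1 + Real.exp (-(4 * r * ν a))) ^ 2),
          Finset.prod_mul_distrib (f := fun a => (1/4:ℝ)), Finset.prod_const, card_univ, Finset.prod_pow]
        have : ((1/4:ℝ)) ^ (Fintype.card (ZMod p)) = ((1/2) ^ (Fintype.card (ZMod p))) ^ 2 := by
          rw [← pow_mul, mul_comm, pow_mul]; norm_num
        rw [this]; ring
  have hK0 : 0 ≤ Kr ν r := by
    unfold Kr
    refine Finset.sum_nonneg fun μ _ => mul_nonneg (by positivity) (Finset.prod_nonneg fun a _ => pow_nonneg (hν0 a).le _)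
  have hAK : ((∏ a, ((d * t a).factorial : ℝ)) * Kr ν r) ^ 2
      ≤ 2 * Real.pi * (2 * r + 1) * Real.exp 4 * E ^ 2 := by
    rw [mul_pow]
    have hX0 : 0 ≤ ∏ a, (2 * Real.pi * (N * ν a) * Real.exp (1 / (6 * (N * ν a)))) :=
      Finset.prod_nonneg fun a _ => by have := hν0 a; positivity
    refine (mul_le_mul hA hK (sq_nonneg _) (mul_nonneg hX0 (sq_nonneg _))).trans ?_
    have hphi : (∏ a, (2 * Real.pi * (N * ν a) * Real.exp (1 / (6 * (N * ν a))))) *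
        ∏ a, ((1/4) * (1 + Real.exp (-(4 * r * ν a))) ^ 2 * (1 / (Real.pi * r * ν a) * (1 + 1 / (r * ν a))))
        ≤ Real.exp 4 := by
      rw [← Finset.prod_mul_distrib]
      refine (Finset.prod_le_prod (fun a _ => by have := hν0 a; positivity)
        fun a _ => phi_bound N r p (ν a) hp0 hr hrN (hν a)).trans ?_
      rw [Finset.prod_const, card_univ, ZMod.card, ← Real.exp_nat_mul]
      apply Real.exp_le_exp.2
      have e : (p:ℝ) * (((N:ℝ) - 2 * r) / (2 * r) + 4 * p / r)
          = (p * ((N:ℝ) - 2 * r)) / (2 * r) + (4 * (p:ℝ)^2) / r := by field_simp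
      rw [e]
      have u1 : (p * ((N:ℝ) - 2 * r)) / (2 * r) ≤ 2 := by
        rw [div_le_iff₀ (by positivity)]; linarith
      have u2 : (4 * (p:ℝ)^2) / r ≤ 1 := by
        rw [div_le_iff₀ (by positivity)]; linarith
      linarith
    calc _ = 2 * Real.pi * (2 * r + 1) * ((∏ a, (2 * Real.pi * (N * ν a) * Real.exp (1 / (6 * (N * ν a))))) *
        ∏ a, ((1/4) * (1 + Real.exp (-(4 * r * ν a))) ^ 2 * (1 / (Real.pi * r * ν a) * (1 + 1 / (r * ν a))))) * E ^ 2 := by ring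
      _ ≤ _ := by gcongr
  have hS := Stirling.le_factorial_stirling N
  have hfin : 2 * Real.pi * (2 * r + 1) * Real.exp 4 * E ^ 2
      ≤ (Real.exp 2 * (N.factorial * ∏ a, ν a ^ (d * t a))) ^ 2 := by
    have hP0 : 0 ≤ ∏ a, ν a ^ (d * t a) := Finset.prod_nonneg fun a _ => pow_nonneg (hν0 a).le _
    have h3 : √(2 * Real.pi * N) * E ≤ N.factorial * ∏ a, ν a ^ (d * t a) := by
      rw [hE, ← mul_assoc]
      exact mul_le_mul_of_nonneg_right hS hP0
    have h4 := pow_le_pow_left₀ (by positivity) h3 2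
    rw [mul_pow, Real.sq_sqrt (by positivity)] at h4
    have e4 : Real.exp 4 = Real.exp 2 ^ 2 := by rw [← Real.exp_nat_mul]; norm_num
    rw [mul_pow (Real.exp 2), ← e4]
    have hrr : (2 * r + 1 : ℝ) ≤ N := by exact_mod_cast hrN
    calc 2 * Real.pi * (2 * r + 1) * Real.exp 4 * E ^ 2 ≤ 2 * Real.pi * N * Real.exp 4 * E ^ 2 := by gcongr
      _ = Real.exp 4 * (2 * Real.pi * N * E ^ 2) := by ring
      _ ≤ _ := mul_le_mul_of_nonneg_left h4 (Real.exp_pos _).le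
  refine (abs_le_of_sq_le_sq (hAK.trans hfin) ?_ |> le_of_abs_le)
  have hP0 : 0 ≤ ∏ a, ν a ^ (d * t a) := Finset.prod_nonneg fun a _ => pow_nonneg (hν0 a).le _
  positivity

lemma bulk_one (n d p r m : ℕ) [NeZero p] (hd : 3 ≤ d) (hdp : d ≤ p) (hn : 1 ≤ n)
    (hm : n ≤ p * m) (hr : 2 * r + 2 * m ≤ n * d) (hr1 : 1 ≤ r)
    (h1 : (p:ℝ) * ((n * d : ℕ) - 2 * r) ≤ 4 * r) (h2 : 4 * (p:ℝ)^2 ≤ r)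
    (h3 : (3 * ((n:ℝ) * d + 1)) ^ p ≤ Real.exp (n / (144 * (p:ℝ)^2)))
    (v : Fin n → ZMod p) (hν : ∀ a, 1/2 ≤ (p:ℝ) * nu n (tp v) a)
    (η : ℝ) (hη : η = p * ∑ a, nu n (tp v) a ^ 2 - 1) (hη1 : 144 * (p:ℝ)^2 * η ≤ 1)
    (hη2 : 6 * n * (η * √η) ≤ 1) :
    (p:ℝ) ^ n * goodCnt n d p v ≤ (Real.exp 3 + 1) * p * (n * d).factorial := by
  have hp0 : (0:ℝ) < p := by exact_mod_cast Nat.pos_of_ne_zero (NeZero.ne p)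
  have hp1 : (1:ℝ) ≤ p := by exact_mod_cast Nat.pos_of_ne_zero (NeZero.ne p)
  set t := tp v with htd
  have ht : ∑ a, t a = n := sum_tp v
  have hν0 : ∀ a, 0 < nu n t a := by
    intro a
    rcases (nu_nonneg n t a).lt_or_eq with h | h
    · exact h
    · have := hν a; rw [← h] at this; norm_num at this
  set PP := ∏ a, nu n t a ^ (d * t a) with hPi
  have hPi0 : 0 < PP := Finset.prod_pos fun a _ => pow_pos (hν0 a) _
  set A := ∏ a, ((d * t a).factorial : ℝ) with hA
  have hA0 : 0 ≤ A := by rw [hA]; positivity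
  have hm1 : 1 ≤ m := by
    rcases Nat.eq_zero_or_pos m with h | h
    · subst h; omega
    · exact h
  have hW := bulk_W n d p r m hd hdp hm hr t ht (nu n t) (fun a => (hν0 a).le) (sum_nu n t hn ht) η hη hη1 hη2
  have hR := stir_ratio n d p r t ht hn (by omega) hr1 (by omega) hν h1 h2
  have hC := prod_fact_crude n d p (by omega) t hn ht
  have hG : (goodCnt n d p v : ℝ) ≤ A * Wc n d p t := by
    rw [hA]; exact_mod_cast goodCnt_le n d p v
  have hC2 : A * Real.exp (-(n / (144 * (p:ℝ)^2))) ≤ (n * d).factorial * PP := by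
    rw [Real.exp_neg, ← div_eq_mul_inv, div_le_iff₀ (Real.exp_pos _)]
    refine hC.trans ?_
    calc _ = (3 * ((n:ℝ) * d + 1)) ^ p * ((n * d).factorial * PP) := by rw [hPi]; ring
      _ ≤ Real.exp (n / (144 * (p:ℝ)^2)) * ((n * d).factorial * PP) := by gcongr
      _ = _ := mul_comm _ _
  have key : ((p:ℝ) ^ n * goodCnt n d p v) * PP ≤ ((Real.exp 3 + 1) * p * (n * d).factorial) * PP := by
    calc ((p:ℝ) ^ n * goodCnt n d p v) * PP ≤ ((p:ℝ) ^ n * (A * Wc n d p t)) * PP := by gcongr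
      _ = A * ((p:ℝ) ^ n * (Wc n d p t * PP)) := by ring
      _ ≤ A * (Real.exp 1 * (p * Kr (nu n t) r) + Real.exp (-(n / (144 * (p:ℝ)^2)))) :=
          mul_le_mul_of_nonneg_left hW hA0
      _ = Real.exp 1 * p * (A * Kr (nu n t) r) + A * Real.exp (-(n / (144 * (p:ℝ)^2))) := by ring
      _ ≤ Real.exp 1 * p * (Real.exp 2 * ((n * d).factorial * PP)) + (n * d).factorial * PP := by gcongr
      _ = (Real.exp 1 * Real.exp 2) * p * ((n * d).factorial * PP) + 1 * ((n * d).factorial * PP) := by ring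
      _ ≤ (Real.exp 1 * Real.exp 2) * p * ((n * d).factorial * PP) + p * ((n * d).factorial * PP) := by gcongr
      _ = _ := by rw [← Real.exp_add]; norm_num; ring
  exact le_of_mul_le_mul_right key hPi0

/-- a nonvanishing count forces zero coordinate sum -/
lemma sum_zero (n d p : ℕ) [Fact p.Prime] (hd : 1 ≤ d) (hdp : d < p) (v : Fin n → ZMod p)
    (h : goodCnt n d p v ≠ 0) : ∑ i, v i = 0 := by
  obtain ⟨σ, hσ⟩ := Finset.card_ne_zero.1 h
  have hσ2 := (Finset.mem_filter.1 hσ).2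
  have h1 : ∑ x : Fin n × Fin d, v (σ x).1 = 0 := by
    rw [Fintype.sum_prod_type]
    exact Finset.sum_eq_zero fun k _ => hσ2 k
  rw [Equiv.sum_comp σ (fun x => v x.1), Fintype.sum_prod_type] at h1
  simp only [sum_const, card_univ, Fintype.card_fin, nsmul_eq_mul] at h1
  rw [← Finset.mul_sum] at h1
  rcases mul_eq_zero.1 h1 with h2 | h2
  · exfalso
    rw [ZMod.natCast_eq_zero_iff] at h2
    have := Nat.le_of_dvd (by omega) h2
    omega
  · exact h2

lemma card_sum_zero (n p : ℕ) [NeZero p] (hn : 1 ≤ n) :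
    ((univ.filter (fun v : Fin n → ZMod p => ∑ i, v i = 0)).card : ℝ) * p ≤ (p:ℝ) ^ n := by
  obtain ⟨k, rfl⟩ : ∃ k, n = k + 1 := ⟨n - 1, by omega⟩
  have : (univ.filter (fun v : Fin (k+1) → ZMod p => ∑ i, v i = 0)).card ≤ p ^ k := by
    have h := Finset.card_le_card_of_injOn (s := univ.filter (fun v : Fin (k+1) → ZMod p => ∑ i, v i = 0))
      (t := (univ : Finset (Fin k → ZMod p))) (fun v => Fin.tail v) (fun _ _ => by simp) (by
        intro v hv w hw hvw
        have hv2 := (Finset.mem_filter.1 hv).2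
        have hw2 := (Finset.mem_filter.1 hw).2
        have hvw2 : ∀ i : Fin k, v i.succ = w i.succ := fun i => congrFun hvw i
        rw [Fin.sum_univ_succ] at hv2 hw2
        simp only [hvw2] at hv2
        funext i
        refine Fin.cases ?_ (fun i => hvw2 i) i
        have := hv2.trans hw2.symm
        exact add_right_cancel this)
    simpa [ZMod.card] using h
  rw [pow_succ]
  gcongr
  exact_mod_cast this

/-- near-constant vectors with nonzero constant are never killed -/
lemma near_const (n d p : ℕ) [Fact p.Prime] (hd : 1 ≤ d) (hdp : d < p) (v : Fin n → ZMod p)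
    (b : ZMod p) (hb : b ≠ 0) (h : d * (univ.filter (fun i => v i ≠ b)).card < n) :
    goodCnt n d p v = 0 := by
  by_contra hne
  obtain ⟨σ, hσ⟩ := Finset.card_ne_zero.1 hne
  have hσ2 := (Finset.mem_filter.1 hσ).2
  set B := univ.filter (fun x : Fin n × Fin d => v (σ x).1 ≠ b) with hB
  have hBc : B.card = d * (univ.filter (fun i => v i ≠ b)).card := by
    have h1 : B.card = (univ.filter (fun x : Fin n × Fin d => v x.1 ≠ b)).card := by
      rw [hB]
      refine Finset.card_bij (fun x _ => σ x) (fun x hx => ?_) (fun x _ y _ hxy => σ.injective hxy) (fun y hy => ?_)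
      · simpa using hx
      · exact ⟨σ.symm y, by simpa using hy, by simp⟩
    have h2 : (Finset.univ.filter (fun x : Fin n × Fin d => v x.1 ≠ b))
      = (Finset.univ.filter (fun i => v i ≠ b)) ×ˢ (Finset.univ : Finset (Fin d)) := by
      ext x; simp
    rw [h1, h2, Finset.card_product, Finset.card_univ, Fintype.card_fin, mul_comm]
  have hex : ∃ k, k ∉ B.image Prod.fst := by
    by_contra hall
    push Not at hall
    have : (univ : Finset (Fin n)) ⊆ B.image Prod.fst := fun k _ => hall k
    have := (Finset.card_le_card this).trans Finset.card_image_le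
    rw [card_univ, Fintype.card_fin] at this
    omega
  obtain ⟨k, hk⟩ := hex
  have hrow : ∀ i, v (σ (k, i)).1 = b := by
    intro i
    by_contra hi
    exact hk (Finset.mem_image.2 ⟨(k, i), by rw [hB]; simpa using hi, rfl⟩)
  have h3 := hσ2 k
  simp only [hrow, sum_const, card_univ, Fintype.card_fin, nsmul_eq_mul] at h3
  rcases mul_eq_zero.1 h3 with h2 | h2
  · rw [ZMod.natCast_eq_zero_iff] at h2
    have := Nat.le_of_dvd (by omega) h2
    omega
  · exact hb h2

end DSR

namespace DSR

lemma total (n d p r m : ℕ) [Fact p.Prime] (hd : 3 ≤ d) (hdp : d < p) (hn : 1 ≤ n)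
    (hm : n ≤ p * m) (hr : 2 * r + 2 * m ≤ n * d) (hr1 : 1 ≤ r)
    (h1 : (p:ℝ) * ((n * d : ℕ) - 2 * r) ≤ 4 * r) (h2 : 4 * (p:ℝ)^2 ≤ r)
    (h3 : (3 * ((n:ℝ) * d + 1)) ^ p ≤ Real.exp (n / (144 * (p:ℝ)^2)))
    (γ : ℝ) (hγ : 0 < γ) (c1 : Real.exp (1+2^d) * p * √(8 * γ) ≤ 1/2)
    (c2 : ((n:ℝ) + 1) ^ p * ((3 * (n * d + 1)) ^ p * Real.exp (-γ * n)) ≤ 1)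
    (c3 : 32 * (p:ℝ)^2 * γ ≤ 1 / (64 * d))
    (c5 : 144 * (p:ℝ)^2 * (21 * γ) ≤ 1) (c6 : 6 * n * (21 * γ * √(21 * γ)) ≤ 1) :
    ∑ v ∈ univ.filter (fun v : Fin n → ZMod p => v ≠ 0), (goodCnt n d p v : ℝ)
      ≤ (Real.exp 3 + 3) * (n * d).factorial := by
  have hn0 : (0:ℝ) < n := by exact_mod_cast hn
  have hp1 : (1:ℝ) ≤ p := by exact_mod_cast (by omega : 1 ≤ p)
  have hp0 : (0:ℝ) < p := by linarith
  have hd3 : (3:ℝ) ≤ d := by exact_mod_cast hd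
  set S0 := univ.filter (fun v : Fin n → ZMod p => v ≠ 0 ∧ ((univ.filter (fun i => v i ≠ 0)).card : ℝ) ≤ 8 * γ * n) with hS0
  set S1 := univ.filter (fun v : Fin n → ZMod p => Qf d p (nu n (tp v)) ≤ 1 - γ) with hS1
  set S2 := univ.filter (fun v : Fin n → ZMod p => ∑ i, v i = 0 ∧
    (p:ℝ) ^ n * goodCnt n d p v ≤ (Real.exp 3 + 1) * p * (n * d).factorial) with hS2
  have b0 : ∑ v ∈ S0, (goodCnt n d p v : ℝ) ≤ (n * d).factorial := by
    rw [hS0]; exact sparse_total n d p hd (8 * γ) c1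
  have b1 : ∑ v ∈ S1, (goodCnt n d p v : ℝ) ≤ (n * d).factorial := by
    refine (mid_total n d p (by omega) hn γ S1 (fun v hv => (Finset.mem_filter.1 hv).2)).trans ?_
    calc _ ≤ 1 * ((n * d).factorial : ℝ) := by gcongr
      _ = _ := one_mul _
  have b2 : ∑ v ∈ S2, (goodCnt n d p v : ℝ) ≤ (Real.exp 3 + 1) * (n * d).factorial := by
    have hpn : (0:ℝ) < (p:ℝ) ^ n := by positivity
    have e : (p:ℝ) ^ n * ∑ v ∈ S2, (goodCnt n d p v : ℝ) ≤ (p:ℝ) ^ n * ((Real.exp 3 + 1) * (n * d).factorial) := by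
      rw [Finset.mul_sum]
      refine (Finset.sum_le_sum fun v hv => (Finset.mem_filter.1 hv).2.2).trans ?_
      rw [Finset.sum_const, nsmul_eq_mul]
      have hc : (S2.card : ℝ) * p ≤ (p:ℝ) ^ n := by
        refine le_trans ?_ (card_sum_zero n p hn)
        gcongr
        intro v hv
        rw [hS2, Finset.mem_filter] at hv
        exact Finset.mem_filter.2 ⟨mem_univ _, hv.2.1⟩
      calc (S2.card : ℝ) * ((Real.exp 3 + 1) * p * (n * d).factorial)
          = (S2.card * p) * ((Real.exp 3 + 1) * (n * d).factorial) := by ring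
        _ ≤ _ := by gcongr
    exact le_of_mul_le_mul_left e hpn
  have hpt : ∀ v : Fin n → ZMod p, v ≠ 0 → (goodCnt n d p v : ℝ)
      ≤ (if v ∈ S0 then (goodCnt n d p v : ℝ) else 0) + (if v ∈ S1 then (goodCnt n d p v : ℝ) else 0)
        + (if v ∈ S2 then (goodCnt n d p v : ℝ) else 0) := by
    intro v hv
    have g0 : (0:ℝ) ≤ goodCnt n d p v := by positivity
    have z0 : (0:ℝ) ≤ if v ∈ S0 then (goodCnt n d p v : ℝ) else 0 := by split_ifs <;> simp
    have z1 : (0:ℝ) ≤ if v ∈ S1 then (goodCnt n d p v : ℝ) else 0 := by split_ifs <;> simp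
    have z2 : (0:ℝ) ≤ if v ∈ S2 then (goodCnt n d p v : ℝ) else 0 := by split_ifs <;> simp
    by_cases hz : goodCnt n d p v = 0
    · have : (goodCnt n d p v : ℝ) = 0 := by exact_mod_cast hz
      linarith
    by_cases m1 : v ∈ S1
    · rw [if_pos m1]; linarith
    have hgap : 1 - Qf d p (nu n (tp v)) < γ := by
      by_contra hh
      push Not at hh
      exact m1 (Finset.mem_filter.2 ⟨mem_univ _, by linarith⟩)
    have ht := sum_tp v
    have hs := sum_nu n (tp v) hn ht
    have hcompl : ∀ b, ((univ.filter (fun i => v i ≠ b)).card : ℝ) = n * (1 - nu n (tp v) b) := by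
      intro b
      have e := Finset.card_filter_add_card_filter_not (s := (univ : Finset (Fin n))) (fun i => v i = b)
      rw [card_univ, Fintype.card_fin] at e
      have e2 : (tp v b : ℝ) + ((univ.filter (fun i => v i ≠ b)).card : ℝ) = n := by
        exact_mod_cast e
      rw [nu]; field_simp; linarith
    by_cases hnear : 1 - 1/64 ≤ nu n (tp v) 0
    · have := gap_near d p hd (nu n (tp v)) (nu_nonneg n _) hs hnear
      have m0 : v ∈ S0 := by
        refine Finset.mem_filter.2 ⟨mem_univ _, hv, ?_⟩
        rw [hcompl 0, mul_comm]
        gcongr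
        linarith
      rw [if_pos m0]; linarith
    push Not at hnear
    have heps : 1 / (64 * (d:ℝ)) ≤ 1/64 := by
      apply one_div_le_one_div_of_le (by norm_num); linarith
    have hspread : ∀ a, nu n (tp v) a ≤ 1 - 1 / (64 * (d:ℝ)) := by
      intro a
      by_cases ha : a = 0
      · subst ha; linarith
      by_contra hh
      push Not at hh
      apply hz
      refine near_const n d p (by omega) hdp v a ha ?_
      have e := hcompl a
      have : (d:ℝ) * ((univ.filter (fun i => v i ≠ a)).card : ℝ) < n := by
        rw [e]
        have l1 : 1 - nu n (tp v) a < 1 / (64 * (d:ℝ)) := by linarith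
        calc (d:ℝ) * (n * (1 - nu n (tp v) a)) ≤ d * (n * (1 / (64 * (d:ℝ)))) := by gcongr
          _ = n / 64 := by field_simp
          _ < n := by linarith
      exact_mod_cast this
    have hg1 : 32 * (p:ℝ)^2 * (1 - Qf d p (nu n (tp v))) ≤ 1 / (64 * (d:ℝ)) := by
      refine le_trans ?_ c3
      gcongr
    have k1 := gap_spread d p hd (nu n (tp v)) (nu_nonneg n _) hs (1 / (64 * (d:ℝ))) (by positivity) hspread hg1
    have hpg : 64 * (p:ℝ) * (1 - Qf d p (nu n (tp v))) ≤ 1 := by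
      have : 64 * (p:ℝ) * (1 - Qf d p (nu n (tp v))) ≤ 64 * p * γ := by gcongr
      have q : (p:ℝ) * γ ≤ (p:ℝ)^2 * γ := by
        have := mul_le_mul_of_nonneg_right hp1 (mul_nonneg hp0.le hγ.le)
        nlinarith
      linarith
    obtain ⟨k2, k3⟩ := bulk_shape p (nu n (tp v)) (nu_nonneg n _) hs (1 - Qf d p (nu n (tp v))) k1 hpg
    have m2 : v ∈ S2 := by
      refine Finset.mem_filter.2 ⟨mem_univ _, sum_zero n d p (by omega) hdp v hz, ?_⟩
      have hη : (p:ℝ) * ∑ a, nu n (tp v) a ^ 2 - 1 ≤ 21 * γ := by linarith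
      refine bulk_one n d p r m hd hdp.le hn hm hr hr1 h1 h2 h3 v (fun a => (k2 a).1) _ rfl ?_ ?_
      · refine le_trans ?_ c5
        gcongr
      · refine le_trans ?_ c6
        gcongr
    rw [if_pos m2]; linarith
  have hsub : ∀ S : Finset (Fin n → ZMod p), ∑ v ∈ univ.filter (fun v : Fin n → ZMod p => v ≠ 0),
      (if v ∈ S then (goodCnt n d p v : ℝ) else 0) ≤ ∑ v ∈ S, (goodCnt n d p v : ℝ) := by
    intro S
    rw [← Finset.sum_filter]
    refine Finset.sum_le_sum_of_subset_of_nonneg (fun v hv => (Finset.mem_filter.1 hv).2) (fun _ _ _ => by positivity)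
  refine (Finset.sum_le_sum fun v hv => hpt v (Finset.mem_filter.1 hv).2).trans ?_
  rw [Finset.sum_add_distrib, Finset.sum_add_distrib]
  have := hsub S0
  have := hsub S1
  have := hsub S2
  linarith

lemma total_param (n d p : ℕ) [Fact p.Prime] (hd : 3 ≤ d) (hdp : d < p) (hn : 1 ≤ n) (L B : ℝ)
    (hL : L = Real.log n) (hL1 : 1 ≤ L)
    (hB : B = 10^8 + 128 * Real.exp (1 + 2^d) ^ 2 + 8192 * d) (hBn : B * ((p:ℝ)^3 * L^3) ≤ n) :
    ∑ v ∈ univ.filter (fun v : Fin n → ZMod p => v ≠ 0), (goodCnt n d p v : ℝ)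
      ≤ (Real.exp 3 + 3) * (n * d).factorial := by
  have hn0 : (0:ℝ) < n := by exact_mod_cast hn
  have hd3 : (3:ℝ) ≤ d := by exact_mod_cast hd
  have hp4 : (4:ℝ) ≤ p := by exact_mod_cast (by omega : 4 ≤ p)
  have hp0 : (0:ℝ) < p := by linarith
  have hdpR : (d:ℝ) ≤ p := by exact_mod_cast hdp.le
  set X := (p:ℝ)^3 * L^3 with hX
  set E := Real.exp (1 + 2^d) with hE
  have hE0 : 0 < E := Real.exp_pos _
  have hX0 : 0 < X := by positivity
  have hEX : 0 ≤ E^2 * X := by positivity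
  have hdX : 0 ≤ d * X := by positivity
  have hsplit : 10^8 * X + 128 * (E^2 * X) + 8192 * (d * X) ≤ n := by
    refine le_trans (le_of_eq ?_) hBn; rw [hB]; ring
  have hL3 : L ≤ L^3 := by
    have : (1:ℝ) ≤ L^2 := by nlinarith
    nlinarith
  have hL31 : 1 ≤ L^3 := hL1.trans hL3
  have hpL : (p:ℝ)^3 * L ≤ X := by rw [hX]; gcongr
  have hp3X : (p:ℝ)^3 ≤ X := by
    rw [hX]; exact le_mul_of_one_le_right (by positivity) hL31
  have hp2X : (p:ℝ)^2 ≤ X := by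
    refine le_trans ?_ hp3X
    have : (p:ℝ)^3 = p^2 * p := by ring
    rw [this]; exact le_mul_of_one_le_right (by positivity) (by linarith)
  have hpX : (p:ℝ) ≤ X := by
    refine le_trans ?_ hp2X; nlinarith
  have hX10 : 10^8 * X ≤ n := by linarith
  -- logs
  have hpoly : ((n:ℝ) + 1) * (3 * (n * d + 1)) ≤ Real.exp (4 * L) := by
    have e : Real.exp (4 * L) = (n:ℝ)^4 := by
      have : (4:ℝ) * L = ((4:ℕ):ℝ) * L := by norm_num
      rw [this, Real.exp_nat_mul, hL, Real.exp_log hn0]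
    rw [e]
    have n1 : (1:ℝ) ≤ n := by exact_mod_cast hn
    have dn : 12 * (d:ℝ) ≤ n := by linarith
    have a1 : (n:ℝ) + 1 ≤ 2 * n := by linarith
    have a2 : 3 * ((n:ℝ) * d + 1) ≤ 6 * (n * d) := by nlinarith
    calc ((n:ℝ) + 1) * (3 * (n * d + 1)) ≤ (2 * n) * (6 * (n * d)) := by gcongr
      _ = n^2 * (12 * d) := by ring
      _ ≤ n^2 * n := by gcongr
      _ ≤ n^2 * n * n := le_mul_of_one_le_right (by positivity) n1
      _ = _ := by ring
  set γ := 4 * p * L / n with hγ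
  have hγ0 : 0 < γ := by positivity
  have hγn : γ * n = 4 * p * L := by rw [hγ]; field_simp
  have hp2γ : (p:ℝ)^2 * γ * n = 4 * (p^3 * L) := by
    rw [mul_assoc, hγn]; ring
  -- the integers
  set m := n / p + 1 with hm
  have hpN : 0 < p := by omega
  have hmn : n ≤ p * m := by
    rw [hm]; have := Nat.div_add_mod n p; have := Nat.mod_lt n hpN; rw [mul_add]; omega
  have hmn2 : p * m ≤ n + p := by
    rw [hm]; have := Nat.mul_div_le n p; rw [mul_add]; omega
  have hm4 : 4 * m ≤ n + 4 := by
    have : n / p ≤ n / 4 := Nat.div_le_div_left (by omega) (by norm_num)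
    omega
  set r := n * d / 2 - m with hr
  have hn100 : 100 ≤ n := by
    have : (100:ℝ) ≤ n := by linarith
    exact_mod_cast this
  have hnd : 3 * n ≤ n * d := by rw [mul_comm 3 n]; exact Nat.mul_le_mul_left n hd
  have hr2 : 2 * r + 2 * m ≤ n * d := by omega
  have hr3 : n * d ≤ 2 * r + 2 * m + 1 := by omega
  have hrn : n ≤ r := by omega
  have hrnR : (n:ℝ) ≤ r := by exact_mod_cast hrn
  refine total n d p r m hd hdp hn hmn hr2 (by omega) ?_ ?_ ?_ γ hγ0 ?_ ?_ ?_ ?_ ?_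
  · have h3 : ((n * d : ℕ):ℝ) - 2 * r ≤ 2 * m + 1 := by
      have : ((n * d : ℕ):ℝ) ≤ 2 * r + 2 * m + 1 := by exact_mod_cast hr3
      linarith
    have h4 : (p:ℝ) * m ≤ n + p := by exact_mod_cast hmn2
    have h5 := mul_le_mul_of_nonneg_left h3 hp0.le
    have h6 : (p:ℝ) * (2 * m + 1) = 2 * (p * m) + p := by ring
    linarith
  · linarith
  · have h3 : 3 * ((n:ℝ) * d + 1) ≤ Real.exp (4 * L) := by
      refine le_trans ?_ hpoly
      exact le_mul_of_one_le_left (by positivity) (by linarith)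
    refine (pow_le_pow_left₀ (by positivity) h3 p).trans ?_
    rw [← Real.exp_nat_mul]
    apply Real.exp_le_exp.2
    rw [le_div_iff₀ (by positivity)]
    have : (p:ℝ) * (4 * L) * (144 * (p:ℝ)^2) = 576 * (p^3 * L) := by ring
    linarith
  · have e : Real.exp (1 + 2^d) * p = √((E * p)^2) := by rw [Real.sqrt_sq (by positivity)]
    rw [e, ← Real.sqrt_mul (by positivity), Real.sqrt_le_left (by norm_num)]
    have e2 : ((E * p)^2 * (8 * γ)) * n = 32 * (E^2 * (p^3 * L)) := by
      have : ((E * p)^2 * (8 * γ)) * n = 8 * E^2 * (p^2 * γ * n) := by ring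
      rw [this, hp2γ]; ring
    have e3 : E^2 * (p^3 * L) ≤ E^2 * X := by gcongr
    have e4 : ((E * p)^2 * (8 * γ)) * n ≤ (1/2)^2 * n := by rw [e2]; linarith
    exact le_of_mul_le_mul_right e4 hn0
  · rw [← mul_assoc, ← mul_pow]
    have h3 := pow_le_pow_left₀ (by positivity) hpoly p
    rw [← Real.exp_nat_mul] at h3
    calc _ ≤ Real.exp (p * (4 * L)) * Real.exp (-γ * n) := by gcongr
      _ = 1 := by
        rw [← Real.exp_add, neg_mul, hγn]; ring_nf; simp
  · rw [le_div_iff₀ (by positivity)]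
    have e2 : (32 * (p:ℝ)^2 * γ * (64 * d)) * n = 8192 * (d * (p^3 * L)) := by
      have : (32 * (p:ℝ)^2 * γ * (64 * d)) * n = 2048 * d * (p^2 * γ * n) := by ring
      rw [this, hp2γ]; ring
    have e3 : d * (p^3 * L) ≤ d * X := by gcongr
    have e4 : (32 * (p:ℝ)^2 * γ * (64 * d)) * n ≤ 1 * n := by rw [e2]; linarith
    exact le_of_mul_le_mul_right e4 hn0
  · have e2 : (144 * (p:ℝ)^2 * (21 * γ)) * n = 12096 * (p^3 * L) := by
      have : (144 * (p:ℝ)^2 * (21 * γ)) * n = 3024 * (p^2 * γ * n) := by ring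
      rw [this, hp2γ]; ring
    have e4 : (144 * (p:ℝ)^2 * (21 * γ)) * n ≤ 1 * n := by rw [e2]; linarith
    exact le_of_mul_le_mul_right e4 hn0
  · have e2 : (6 * n * (21 * γ * √(21 * γ)))^2 * n = 36 * 84^3 * X := by
      have : (6 * n * (21 * γ * √(21 * γ)))^2 = 36 * n^2 * (21 * γ)^2 * √(21 * γ)^2 := by ring
      rw [this, Real.sq_sqrt (by positivity)]
      have : 36 * (n:ℝ)^2 * (21 * γ)^2 * (21 * γ) * n = 36 * 21^3 * (γ * n)^3 := by ring
      rw [this, hγn, hX]; ring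
    have e4 : (6 * n * (21 * γ * √(21 * γ)))^2 * n ≤ 1^2 * n := by rw [e2]; linarith
    exact le_of_abs_le (abs_le_of_sq_le_sq (le_of_mul_le_mul_right e4 hn0) (by norm_num))

lemma final (d : ℕ) (hd : 3 ≤ d) :
    ∃ N : ℕ, ∀ n : ℕ, N ≤ n →
      ((Finset.univ.filter (fun P : Equiv.Perm (Fin n × Fin d) =>
          (adjMat n d P).det = 0)).card : ℝ)
        ≤ (n : ℝ) ^ (-(min (1/4 : ℝ) (((d : ℝ) - 2) / (2 * (d : ℝ))))) *
            ((n * d).factorial : ℝ) := by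
  set B : ℝ := 10^8 + 128 * Real.exp (1 + 2^d) ^ 2 + 8192 * d with hB
  have hB0 : 0 < B := by positivity
  have ho := (isLittleO_log_rpow_rpow_atTop (s := (1/4:ℝ)) 3 (by norm_num)).comp_tendsto tendsto_natCast_atTop_atTop
  have hev1 := (Asymptotics.isLittleO_iff.1 ho) (c := 1 / (B * 62^3)) (by positivity)
  have hx : Filter.Tendsto (fun n : ℕ => (n:ℝ) ^ (1/4:ℝ)) Filter.atTop Filter.atTop :=
    (tendsto_rpow_atTop (by norm_num)).comp tendsto_natCast_atTop_atTop
  have hev2 := hx.eventually_ge_atTop (d:ℝ)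
  obtain ⟨N, hN⟩ := Filter.eventually_atTop.1 (hev1.and (hev2.and (Filter.eventually_ge_atTop 3)))
  refine ⟨N, fun n hn => ?_⟩
  obtain ⟨hlog, hxd, hn3⟩ := hN n hn
  set x := (n:ℝ) ^ (1/4:ℝ) with hxdef
  have hn0 : (0:ℝ) < n := by exact_mod_cast (by omega : 0 < n)
  have hn1 : (1:ℝ) ≤ n := by exact_mod_cast (by omega : 1 ≤ n)
  have hx4 : x ^ 4 = n := by
    rw [hxdef, ← Real.rpow_natCast, ← Real.rpow_mul hn0.le]; norm_num
  have hd3 : (3:ℝ) ≤ d := by exact_mod_cast hd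
  have hx0 : 0 < x := by linarith
  have hL1 : 1 ≤ Real.log n := by
    rw [Real.le_log_iff_exp_le hn0]
    have := Real.exp_one_lt_d9
    have : (3:ℝ) ≤ n := by exact_mod_cast hn3
    linarith
  have hlog2 : Real.log n ^ 3 ≤ 1 / (B * 62^3) * x := by
    simp only [Function.comp] at hlog
    have e : Real.log n ^ (3:ℝ) = Real.log n ^ 3 := by
      rw [← Real.rpow_natCast]; norm_num
    rw [e, Real.norm_of_nonneg (by positivity), Real.norm_of_nonneg (by positivity)] at hlog
    exact hlog
  obtain ⟨p, hp, hkp, hpk⟩ := Nat.exists_prime_lt_and_le_two_mul ⌈30 * x⌉₊ (by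
    have : 0 < ⌈30 * x⌉₊ := Nat.ceil_pos.2 (by positivity)
    omega)
  haveI : Fact p.Prime := ⟨hp⟩
  have hk1 := Nat.le_ceil (30 * x)
  have hk2 := Nat.ceil_lt_add_one (by positivity : 0 ≤ 30 * x)
  have hplow : 30 * x ≤ (p:ℝ) - 1 := by
    have : ((⌈30 * x⌉₊ : ℕ) : ℝ) + 1 ≤ p := by exact_mod_cast hkp
    linarith
  have hpup : (p:ℝ) ≤ 62 * x := by
    have : (p:ℝ) ≤ 2 * (⌈30 * x⌉₊ : ℕ) := by exact_mod_cast hpk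
    linarith
  have hdp : d < p := by
    have : (d:ℝ) < p := by linarith
    exact_mod_cast this
  have hBn : B * ((p:ℝ)^3 * Real.log n ^3) ≤ n := by
    calc B * ((p:ℝ)^3 * Real.log n ^3) ≤ B * ((62 * x)^3 * (1 / (B * 62^3) * x)) := by gcongr
      _ = x ^ 4 := by field_simp
      _ = n := hx4
  have htot := total_param n d p hd hdp (by omega) (Real.log n) B rfl hL1 hB hBn
  have hfm := first_moment n d p
  set c := (Finset.univ.filter (fun P : Equiv.Perm (Fin n × Fin d) => (adjMat n d P).det = 0)).card with hc
  have hfmR : ((p:ℝ) - 1) * c ≤ (Real.exp 3 + 3) * (n * d).factorial := by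
    refine le_trans ?_ htot
    have e : ((p - 1 : ℕ) : ℝ) = (p:ℝ) - 1 := by
      rw [Nat.cast_sub (by omega)]; norm_num
    rw [← e]
    exact_mod_cast hfm
  have hexp : Real.exp 3 ≤ 27 := by
    have h := Real.exp_one_lt_d9
    have : Real.exp 3 = Real.exp 1 ^ 3 := by rw [← Real.exp_nat_mul]; norm_num
    rw [this]
    calc Real.exp 1 ^ 3 ≤ 3 ^ 3 := by gcongr; linarith
      _ = 27 := by norm_num
  have hF0 : (0:ℝ) ≤ (n * d).factorial := by positivity
  have hc0 : (0:ℝ) ≤ c := by positivity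
  have h30 : 30 * x * c ≤ 30 * (n * d).factorial := by
    have a1 := mul_le_mul_of_nonneg_right hplow hc0
    have a2 := mul_le_mul_of_nonneg_right (by linarith : Real.exp 3 + 3 ≤ 30) hF0
    linarith
  have hcx : (c:ℝ) ≤ x⁻¹ * (n * d).factorial := by
    rw [inv_mul_eq_div, le_div_iff₀ hx0]; linarith
  refine hcx.trans ?_
  gcongr
  rw [hxdef, ← Real.rpow_neg hn0.le]
  exact Real.rpow_le_rpow_of_exponent_le hn1 (neg_le_neg (min_le_left _ _))

end DSR

/-- For fixed `d ≥ 3` and `𝔡 = min {1/4, (d-2)/(2d)}`, eventually in `n`, the number of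
permutations `P` of `[n]×[d]` with `det A(P) = 0` (over `ℤ`, equivalently over `ℝ`) is
at most `n^{-𝔡} (nd)!`. -/
theorem directed_singular_real (d : ℕ) (hd : 3 ≤ d) :
    ∃ N : ℕ, ∀ n : ℕ, N ≤ n →
      ((Finset.univ.filter (fun P : Equiv.Perm (Fin n × Fin d) =>
          (adjMat n d P).det = 0)).card : ℝ)
        ≤ (n : ℝ) ^ (-(min (1/4 : ℝ) (((d : ℝ) - 2) / (2 * (d : ℝ))))) *
            ((n * d).factorial : ℝ) := by
  exact DSR.final d hd
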